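/- arXiv:1903.07494 — 2 statements merged into one kernel-verified Lean document; each statement's English description precedes it below -/
import Mathlib

section
/- Let μ be a normalized n×n matrix measure on the unit circle 𝕋 (so μ(𝕋) = 1ₙ), let (supp μ)' denote the set of limit points of the support of μ, and let f be the Schur function of μ. Then 𝕋 \ (supp μ)' is exactly the union of the open arcs Γ ⊂ 𝕋 through which f has an analytic continuation taking unitary values on Γ; that is, an open arc Γ ⊂ 𝕋 is disjoint from (supp μ)' if and only if f extends analytically to a neighbourhood of Γ in ℂ and the extension is a unitary matrix at every point of Γ. -/
open Complex Filter Set Metric MeasureTheory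
open scoped ComplexOrder

/-- An `n × n` matrix measure on the unit circle `𝕋 ⊆ ℂ`: a countably additive
assignment of positive semidefinite matrices to Borel sets, represented by a finite
base measure concentrated on the circle together with a positive semidefinite
matrix-valued density (such a representation always exists, e.g. with respect to
the trace measure). -/
structure MatrixMeasure (n : ℕ) where
  base : Measure ℂ
  finite : IsFiniteMeasure base
  circleSupp : base (Metric.sphere (0:ℂ) 1)ᶜ = 0
  dens : ℂ → Matrix (Fin n) (Fin n) ℂ
  dens_meas : ∀ i j, Measurable fun t => dens t i j
  dens_int : ∀ i j, Integrable (fun t => dens t i j) base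
  dens_psd : ∀ᵐ t ∂base, (dens t).PosSemidef

namespace MatrixMeasure

variable {n : ℕ} (μ : MatrixMeasure n)

/-- The value of the matrix measure on a set. -/
noncomputable def meas (A : Set ℂ) : Matrix (Fin n) (Fin n) ℂ :=
  Matrix.of fun i j => ∫ t in A, μ.dens t i j ∂μ.base

/-- The support of the matrix measure: the points all of whose neighbourhoods have
nonzero measure (equivalently, the smallest closed set of full measure). -/
def supp : Set ℂ := {x : ℂ | ∀ ε > 0, μ.meas (Metric.ball x ε) ≠ 0}

/-- The set of limit points of the support. -/
def limitPts : Set ℂ := {x : ℂ | x ∈ closure (μ.supp \ {x})}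

/-- The Carathéodory function `F(z) = ∫ (t+z)/(t-z) dμ(t)` of the matrix measure. -/
noncomputable def cara (z : ℂ) : Matrix (Fin n) (Fin n) ℂ :=
  Matrix.of fun i j => ∫ t, ((t + z) / (t - z)) * μ.dens t i j ∂μ.base

/-- The Schur function `f(z) = z⁻¹ (F(z) - 1)(F(z) + 1)⁻¹` of the matrix measure. -/
noncomputable def schur (z : ℂ) : Matrix (Fin n) (Fin n) ℂ :=
  z⁻¹ • ((μ.cara z - 1) * (μ.cara z + 1)⁻¹)

end MatrixMeasure

/-- An open arc of the unit circle. -/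
def IsOpenArc (Γ : Set ℂ) : Prop :=
  ∃ a b : ℝ, a < b ∧ b - a < 2 * Real.pi ∧
    Γ = (fun θ : ℝ => Complex.exp (θ * Complex.I)) '' Set.Ioo a b

/-! On the unit circle the Carathéodory function `F` is skew-adjoint, so there the Cayley transform
`z f(z) = (F(z) - 1) (F(z) + 1)⁻¹` is unitary. A point `x` of the circle that is not a limit point
of the support carries at most an atom of `μ`, hence `F`, and with it `f`, is meromorphic at `x`.
Since `f` stays bounded as `z → x` along the circle, its singularity at `x` is removable, and the
value there is unitary by continuity.

Conversely, a unitary continuation `g` of `f` near `x` gives the continuation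
`(1 + z g(z)) (1 - z g(z))⁻¹` of `F`, which is smooth away from the isolated zeros of
`det (1 - z g(z))` and skew-adjoint on the circle. So `Re tr F` is `O(δ)` at distance `δ` from the
circle, and since the Poisson kernel is of order `1 / δ` there, balls of radius `δ` have trace
measure `O(δ²)`. A measure on the one-dimensional circle with this property vanishes, so near `x`
the support lies in the discrete set of those zeros. -/

section MassDistribution

open scoped ENNReal NNReal

variable {X : Type*} [MetricSpace X] [MeasurableSpace X] [BorelSpace X] {τ : Measure X} {S : Set X}
  {C : ℝ≥0∞} {d : ℝ≥0} {r₀ : ℝ}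

lemma restrict_le_smul_hausdorffMeasure_of_closedBall_le (hC : C ≠ ∞) (hr₀ : 0 < r₀)
    (hτ : ∀ x ∈ S, ∀ r ∈ Ioo 0 r₀, τ (closedBall x r) ≤ C * ENNReal.ofReal r ^ (d : ℝ)) :
    τ.restrict S ≤ (C + 1) • (Measure.hausdorffMeasure (d : ℝ) : Measure X) := by
  have closedBall_le : ∀ x ∈ S, ∀ r ∈ Ico 0 r₀,
      τ (closedBall x r) ≤ C * ENNReal.ofReal r ^ (d : ℝ) := by
    intro x hx r hr
    have cont : Continuous fun s : ℝ => C * ENNReal.ofReal s ^ (d : ℝ) :=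
      (ENNReal.continuous_const_mul hC).comp
        ((ENNReal.continuous_rpow_const).comp ENNReal.continuous_ofReal)
    refine ge_of_tendsto (cont.continuousWithinAt (s := Ioi r) (x := r)) ?_
    filter_upwards [Ioo_mem_nhdsGT hr.2] with s hs
    exact (measure_mono (closedBall_subset_closedBall hs.1.le)).trans
      (hτ x hx s ⟨hr.1.trans_lt hs.1, hs.2⟩)
  have restrict_le : τ.restrict S ≤ Measure.mkMetric fun r => (C + 1) * r ^ (d : ℝ) := by
    refine Measure.le_mkMetric _ _ (ENNReal.ofReal (r₀ / 2)) (by simpa using hr₀) fun s hs => ?_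
    rw [← Metric.ediam_closure] at hs ⊢
    refine (measure_mono subset_closure).trans ?_
    rw [Measure.restrict_apply isClosed_closure.measurableSet]
    obtain hempty | ⟨x, hxs, hxS⟩ := (closure s ∩ S).eq_empty_or_nonempty
    · simp [hempty]
    have hfin : Metric.ediam (closure s) ≠ ∞ := ne_top_of_le_ne_top ENNReal.ofReal_ne_top hs
    have hdiam : Metric.diam (closure s) < r₀ := by
      have := ENNReal.toReal_mono ENNReal.ofReal_ne_top hs
      rw [ENNReal.toReal_ofReal (by positivity)] at this
      exact this.trans_lt (by linarith)
    calc τ (closure s ∩ S) ≤ τ (closedBall x (Metric.diam (closure s))) :=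
          measure_mono fun w hw => Metric.dist_le_diam_of_mem' hfin hw.1 hxs
      _ ≤ C * ENNReal.ofReal (Metric.diam (closure s)) ^ (d : ℝ) :=
          closedBall_le x hxS _ ⟨Metric.diam_nonneg, hdiam⟩
      _ ≤ (C + 1) * Metric.ediam (closure s) ^ (d : ℝ) := by
          rw [Metric.diam, ENNReal.ofReal_toReal hfin]
          gcongr
          exact le_self_add
  exact restrict_le.trans (Measure.mkMetric_mono_smul (by simpa using hC) (by simp)
    (Eventually.of_forall fun _ => le_rfl))

lemma measure_eq_zero_of_closedBall_le_of_dimH_lt (hC : C ≠ ∞) (hr₀ : 0 < r₀)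
    (hτ : ∀ x ∈ S, ∀ r ∈ Ioo 0 r₀, τ (closedBall x r) ≤ C * ENNReal.ofReal r ^ (d : ℝ))
    (hS : dimH S < d) : τ S = 0 := by
  have := restrict_le_smul_hausdorffMeasure_of_closedBall_le hC hr₀ hτ S
  rw [Measure.smul_apply, hausdorffMeasure_of_dimH_lt hS, smul_zero] at this
  exact le_antisymm ((Measure.restrict_apply_self τ S).symm.le.trans this) zero_le

end MassDistribution

lemma dimH_sphere_le_one (c : ℂ) (R : ℝ) : dimH (sphere c R) ≤ 1 := by
  obtain hR | hR := lt_or_ge R 0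
  · simp [sphere_eq_empty_of_neg hR]
  · rw [← abs_of_nonneg hR, ← range_circleMap]
    simpa using (contDiff_circleMap c R).dimH_range_le

lemma preperfect_sphere {E : Type*} [NormedAddCommGroup E] [NormedSpace ℝ E]
    (hE : 1 < Module.rank ℝ E) (x : E) {r : ℝ} (hr : 0 < r) : Preperfect (sphere x r) := by
  have : Nontrivial E := rank_pos_iff_nontrivial.1 (zero_lt_one.trans hE)
  obtain ⟨v, hv⟩ := NormedSpace.sphere_nonempty (E := E) (x := 0) |>.2 hr.le
  rw [mem_sphere_zero_iff_norm] at hv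
  refine (isPreconnected_sphere hE x r).preperfect_of_nontrivial
    ⟨x + v, by simp [hv], x - v, by simp [hv], fun h => ?_⟩
  have : IsAddTorsionFree E := .of_isTorsionFree ℝ E
  have : v = 0 := self_eq_neg.1 (by simpa [sub_eq_add_neg] using h)
  simp [this, hr.ne] at hv

lemma frequently_norm_eq_one {x : ℂ} (hx : ‖x‖ = 1) : ∃ᶠ z in nhdsWithin x {x}ᶜ, ‖z‖ = 1 := by
  have hacc := preperfect_sphere (by simp [Complex.rank_real_complex]) (0 : ℂ) one_pos x (by simpa)
  simpa using accPt_iff_frequently_nhdsNE.1 hacc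

lemma frequently_norm_lt_one {x : ℂ} (hx : ‖x‖ = 1) : ∃ᶠ z in nhds x, ‖z‖ < 1 := by
  have hcl : x ∈ closure (ball 0 1) := by simp [closure_ball, hx]
  simpa using mem_closure_iff_frequently.1 hcl

lemma IsOpenArc.exists_isOpen_sphere_inter {Γ : Set ℂ} (hΓ : IsOpenArc Γ) :
    ∃ V, IsOpen V ∧ sphere 0 1 ∩ V = Γ := by
  obtain ⟨a, b, -, -, rfl⟩ := hΓ
  obtain ⟨V, hV, himage⟩ :=
    isOpen_induced_iff.1 (isLocalHomeomorph_circleExp.isOpenMap (Ioo a b) isOpen_Ioo)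
  have mem_iff (w : Circle) : (w : ℂ) ∈ V ↔ w ∈ Circle.exp '' Ioo a b := Set.ext_iff.1 himage w
  refine ⟨V, hV, Set.ext fun z => ⟨fun ⟨hz, hzV⟩ => ?_, ?_⟩⟩
  · obtain ⟨θ, hθ, hθz⟩ := (mem_iff ⟨z, hz⟩).1 hzV
    exact ⟨θ, hθ, (Circle.coe_exp θ).symm.trans (congrArg _ hθz)⟩
  · rintro ⟨θ, hθ, rfl⟩
    simp only [← Circle.coe_exp]
    exact ⟨by simp, (mem_iff _).2 ⟨θ, hθ, rfl⟩⟩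

section EntrywiseSubring

open Matrix

variable {ι α R : Type*} [Fintype ι] [DecidableEq ι]

/-- The ring of matrix-valued functions whose entries lie in a given ring `S` of scalar functions,
such as the ring of functions that are analytic at a point. -/
def entrywiseSubring (ι : Type*) [Fintype ι] [DecidableEq ι] [Ring R] (S : Subring (α → R)) :
    Subring (α → Matrix ι ι R) where
  carrier := {A | ∀ i j, (fun x => A x i j) ∈ S}
  mul_mem' {A B} hA hB i j := by
    have : (fun x => (A * B) x i j) = ∑ k, (fun x => A x i k) * fun x => B x k j := by
      ext x
      simp [mul_apply, Finset.sum_apply]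
    exact this ▸ sum_mem fun k _ => mul_mem (hA i k) (hB k j)
  one_mem' i j := by
    obtain rfl | hij := eq_or_ne i j
    · simp only [Pi.one_apply, one_apply_eq]
      exact S.one_mem
    · simp only [Pi.one_apply, one_apply_ne hij]
      exact S.zero_mem
  add_mem' hA hB i j := add_mem (hA i j) (hB i j)
  zero_mem' _ _ := S.zero_mem
  neg_mem' hA i j := neg_mem (hA i j)

lemma trace_mem_of_mem_entrywiseSubring [Ring R] {S : Subring (α → R)} {A : α → Matrix ι ι R}
    (hA : A ∈ entrywiseSubring ι S) : (fun x => (A x).trace) ∈ S := by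
  simpa only [trace, diag_apply, ← Finset.sum_fn] using sum_mem fun i _ => hA i i

lemma smul_mem_entrywiseSubring [Ring R] {S : Subring (α → R)} {f : α → R}
    {A : α → Matrix ι ι R} (hf : f ∈ S) (hA : A ∈ entrywiseSubring ι S) :
    (fun x => f x • A x) ∈ entrywiseSubring ι S :=
  fun i j => mul_mem hf (hA i j)

lemma det_mem_of_mem_entrywiseSubring [CommRing R] {S : Subring (α → R)} {A : α → Matrix ι ι R}
    (hA : A ∈ entrywiseSubring ι S) : (fun x => (A x).det) ∈ S := by
  have : (fun x => (A x).det) = ∑ σ : Equiv.Perm ι,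
      Equiv.Perm.sign σ • ∏ i, fun x => A x (σ i) i := by
    ext x
    simp [det_apply, Finset.sum_apply, Finset.prod_apply, Units.smul_def]
  rw [this]
  refine sum_mem fun σ _ => ?_
  rw [Units.smul_def]
  exact zsmul_mem (prod_mem fun i _ => hA (σ i) i) _

lemma inv_mem_entrywiseSubring [Field R] {S : Subring (α → R)} {A : α → Matrix ι ι R}
    (hA : A ∈ entrywiseSubring ι S) (hdet : (fun x => (A x).det⁻¹) ∈ S) :
    (fun x => (A x)⁻¹) ∈ entrywiseSubring ι S := by
  intro i j
  simp only [Matrix.inv_def, Ring.inverse_eq_inv', Matrix.smul_apply, smul_eq_mul, adjugate_apply]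
  refine mul_mem hdet (det_mem_of_mem_entrywiseSubring fun k l => ?_)
  obtain rfl | hk := eq_or_ne k j
  · simp only [updateRow_self, ← one_eq_pi_single]
    exact one_mem (entrywiseSubring ι S) i l
  · simpa only [updateRow_ne hk] using hA k l

end EntrywiseSubring

section SkewAdjoint

open Matrix

variable {ι 𝕜 : Type*} [Fintype ι] [RCLike 𝕜] {A : Matrix ι ι 𝕜}

lemma re_trace_eq_zero_of_mem_skewAdjoint (hA : A ∈ skewAdjoint (Matrix ι ι 𝕜)) :
    RCLike.re A.trace = 0 := by
  have := congrArg (RCLike.re ∘ trace) (skewAdjoint.mem_iff.1 hA)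
  simp only [Function.comp_apply, star_eq_conjTranspose, trace_conjTranspose, RCLike.star_def,
    RCLike.conj_re, trace_neg, map_neg] at this
  linarith

lemma re_star_dotProduct_mulVec_eq_zero_of_mem_skewAdjoint (hA : A ∈ skewAdjoint (Matrix ι ι 𝕜))
    (v : ι → 𝕜) : RCLike.re (star v ⬝ᵥ A *ᵥ v) = 0 := by
  have hstar : star (star v ⬝ᵥ A *ᵥ v) = -(star v ⬝ᵥ A *ᵥ v) := by
    rw [← star_dotProduct, star_mulVec, ← star_eq_conjTranspose, skewAdjoint.mem_iff.1 hA,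
      vecMul_neg, neg_dotProduct, ← dotProduct_mulVec]
  have := congrArg RCLike.re hstar
  rw [RCLike.star_def, RCLike.conj_re, map_neg] at this
  linarith

end SkewAdjoint

section Cayley

open Matrix

variable {ι : Type*} [Fintype ι] [DecidableEq ι]

/-- The Cayley transform, which carries matrices with positive semidefinite real part to
contractions and skew-adjoint matrices to unitary ones. Since `(A + 1)⁻¹` is Mathlib's matrix
inverse, the transform is `0` when `A + 1` is singular. -/
noncomputable def cayley {R : Type*} [CommRing R] (A : Matrix ι ι R) : Matrix ι ι R :=
  (A - 1) * (A + 1)⁻¹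

/-- The inverse Cayley transform; it is `0` when `1 - W` is singular. -/
noncomputable def invCayley {R : Type*} [CommRing R] (W : Matrix ι ι R) : Matrix ι ι R :=
  (1 + W) * (1 - W)⁻¹

section CommRing

variable {R : Type*} [CommRing R] {A : Matrix ι ι R}

lemma one_sub_cayley (hA : IsUnit (A + 1).det) : 1 - cayley A = (2 : R) • (A + 1)⁻¹ := by
  have := mul_nonsing_inv _ hA
  rw [cayley, two_smul]
  nth_rewrite 1 [← this]
  noncomm_ring

lemma one_add_cayley (hA : IsUnit (A + 1).det) : 1 + cayley A = (2 : R) • (A * (A + 1)⁻¹) := by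
  have := mul_nonsing_inv _ hA
  rw [cayley, two_smul]
  nth_rewrite 1 [← this]
  noncomm_ring

variable [Invertible (2 : R)]

lemma one_sub_cayley_mul (hA : IsUnit (A + 1).det) : (1 - cayley A) * (⅟(2 : R) • (A + 1)) = 1 := by
  rw [one_sub_cayley hA, smul_mul_smul_comm, mul_invOf_self, nonsing_inv_mul _ hA, one_smul]

lemma isUnit_det_one_sub_cayley (hA : IsUnit (A + 1).det) : IsUnit (1 - cayley A).det :=
  isUnit_det_of_right_inverse (one_sub_cayley_mul hA)

lemma invCayley_cayley (hA : IsUnit (A + 1).det) : invCayley (cayley A) = A := by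
  rw [invCayley, inv_eq_right_inv (one_sub_cayley_mul hA), one_add_cayley hA,
    smul_mul_smul_comm, mul_invOf_self, one_smul, nonsing_inv_mul_cancel_right _ _ hA]

end CommRing

section StarRing

variable {R : Type*} [CommRing R] [StarRing R] {A W : Matrix ι ι R}

lemma cayley_mem_unitaryGroup (hA : A ∈ skewAdjoint (Matrix ι ι R)) (hdet : IsUnit (A + 1).det) :
    cayley A ∈ unitaryGroup ι R := by
  have star_add_one : (A + 1)ᴴ = 1 - A := by
    rw [← star_eq_conjTranspose, star_add, star_one, skewAdjoint.mem_iff.1 hA, neg_add_eq_sub]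
  have star_sub_one : (A - 1)ᴴ = -(A + 1) := by
    rw [← star_eq_conjTranspose, star_sub, star_one, skewAdjoint.mem_iff.1 hA]
    abel
  have hdet' : IsUnit (1 - A).det := by
    rw [← star_add_one, det_conjTranspose]
    exact hdet.star
  rw [mem_unitaryGroup_iff', star_eq_conjTranspose, cayley, conjTranspose_mul,
    conjTranspose_nonsing_inv, star_add_one, star_sub_one]
  calc (1 - A)⁻¹ * -(A + 1) * ((A - 1) * (A + 1)⁻¹)
      = (1 - A)⁻¹ * (1 - A) * ((A + 1) * (A + 1)⁻¹) := by noncomm_ring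
    _ = 1 := by rw [nonsing_inv_mul _ hdet', mul_nonsing_inv _ hdet, one_mul]

lemma invCayley_mem_skewAdjoint (hW : W ∈ unitaryGroup ι R) (hdet : IsUnit (1 - W).det) :
    invCayley W ∈ skewAdjoint (Matrix ι ι R) := by
  have hWW : Wᴴ * W = 1 := mem_unitaryGroup_iff'.1 hW
  have hdet' : IsUnit (1 - W)ᴴ.det := by
    rw [det_conjTranspose]
    exact hdet.star
  have key : (1 + W)ᴴ * (1 - W) = (1 - W)ᴴ * -(1 + W) := by
    simp only [conjTranspose_add, conjTranspose_sub, conjTranspose_one, add_mul, mul_sub, sub_mul,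
      mul_neg, mul_add, hWW, one_mul, mul_one]
    abel
  rw [skewAdjoint.mem_iff, star_eq_conjTranspose, invCayley, conjTranspose_mul,
    conjTranspose_nonsing_inv]
  calc (1 - W)ᴴ⁻¹ * (1 + W)ᴴ
      = (1 - W)ᴴ⁻¹ * ((1 + W)ᴴ * (1 - W)) * (1 - W)⁻¹ := by
        rw [← mul_assoc, mul_nonsing_inv_cancel_right _ _ hdet]
    _ = -((1 + W) * (1 - W)⁻¹) := by
        rw [key, nonsing_inv_mul_cancel_left _ _ hdet', neg_mul]

end StarRing

section RCLike

variable {𝕜 : Type*} [RCLike 𝕜] {A W : Matrix ι ι 𝕜}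

lemma smul_mem_unitaryGroup {c : 𝕜} (hc : ‖c‖ = 1) (hW : W ∈ unitaryGroup ι 𝕜) :
    c • W ∈ unitaryGroup ι 𝕜 := by
  rw [mem_unitaryGroup_iff] at hW ⊢
  rw [star_smul, smul_mul_smul_comm, hW, RCLike.star_def, RCLike.mul_conj, hc]
  simp

lemma det_add_one_ne_zero_of_re_nonneg (hA : ∀ v, 0 ≤ RCLike.re (star v ⬝ᵥ A *ᵥ v)) :
    (A + 1).det ≠ 0 := by
  intro hdet
  obtain ⟨v, hv, hAv⟩ := exists_mulVec_eq_zero_iff.2 hdet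
  rw [add_mulVec, one_mulVec] at hAv
  have hneg := hA v
  rw [eq_neg_of_add_eq_zero_left hAv, dotProduct_neg, map_neg] at hneg
  have hpos := (RCLike.pos_iff.1 (dotProduct_star_self_pos_iff.2 hv)).1
  linarith

end RCLike

section EntrywiseSubring

variable {α R : Type*} [Field R] {S : Subring (α → R)} {A W : α → Matrix ι ι R}

lemma cayley_mem_entrywiseSubring (hA : A ∈ entrywiseSubring ι S)
    (hdet : (fun x => (A x + 1).det⁻¹) ∈ S) : (fun x => cayley (A x)) ∈ entrywiseSubring ι S :=
  mul_mem (sub_mem hA (one_mem _)) (inv_mem_entrywiseSubring (add_mem hA (one_mem _)) hdet)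

lemma invCayley_mem_entrywiseSubring (hW : W ∈ entrywiseSubring ι S)
    (hdet : (fun x => (1 - W x).det⁻¹) ∈ S) :
    (fun x => invCayley (W x)) ∈ entrywiseSubring ι S :=
  mul_mem (add_mem (one_mem _) hW) (inv_mem_entrywiseSubring (sub_mem (one_mem _) hW) hdet)

end EntrywiseSubring

end Cayley

section PointwiseRegularity

variable {𝕜 : Type*} [NontriviallyNormedField 𝕜]

/-- The ring of functions that are analytic at `x`. -/
def analyticAtSubring (x : 𝕜) : Subring (𝕜 → 𝕜) where
  carrier := {f | AnalyticAt 𝕜 f x}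
  mul_mem' := AnalyticAt.mul
  one_mem' := analyticAt_const
  add_mem' := AnalyticAt.add
  zero_mem' := analyticAt_const
  neg_mem' := AnalyticAt.neg

/-- The ring of functions that are meromorphic at `x`. -/
def meromorphicAtSubring (x : 𝕜) : Subring (𝕜 → 𝕜) where
  carrier := {f | MeromorphicAt f x}
  mul_mem' := MeromorphicAt.mul
  one_mem' := MeromorphicAt.const 1 x
  add_mem' := MeromorphicAt.add
  zero_mem' := MeromorphicAt.const 0 x
  neg_mem' := MeromorphicAt.neg

end PointwiseRegularity

lemma analyticAt_of_meromorphicNFAt_of_frequently_norm_le {𝕜 E : Type*}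
    [NontriviallyNormedField 𝕜] [NormedAddCommGroup E] [NormedSpace 𝕜 E]
    {f : 𝕜 → E} {x : 𝕜} {C : ℝ} (hf : MeromorphicNFAt f x)
    (hC : ∃ᶠ z in nhdsWithin x {x}ᶜ, ‖f z‖ ≤ C) : AnalyticAt 𝕜 f x := by
  rw [← hf.meromorphicOrderAt_nonneg_iff_analyticAt]
  by_contra! hneg
  have hlim := tendsto_norm_atTop_iff_cobounded.2 (tendsto_cobounded_of_meromorphicOrderAt_neg hneg)
  exact hC ((hlim.eventually_gt_atTop C).mono fun z hz => not_le.2 hz)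

section EntrywiseIntegral

open Matrix

lemma linearMap_apply_eq_sum {ι κ R N : Type*} [Fintype ι] [Fintype κ] [DecidableEq ι]
    [DecidableEq κ] [CommSemiring R] [AddCommMonoid N] [Module R N] (L : Matrix ι κ R →ₗ[R] N)
    (B : Matrix ι κ R) : L B = ∑ i, ∑ j, B i j • L (single i j 1) := by
  conv_lhs => rw [matrix_eq_sum_single B]
  simp only [map_sum, ← map_smul, smul_single, smul_eq_mul, mul_one]

variable {α ι κ 𝕜 E : Type*} [MeasurableSpace α] {ν : Measure α} [Finite ι] [Finite κ] [RCLike 𝕜]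
  [NormedAddCommGroup E] [NormedSpace 𝕜 E] {M : α → Matrix ι κ 𝕜}

lemma integrable_linearMap_apply (hM : ∀ i j, Integrable (fun t => M t i j) ν)
    (L : Matrix ι κ 𝕜 →ₗ[𝕜] E) : Integrable (fun t => L (M t)) ν := by
  classical
  have := Fintype.ofFinite ι
  have := Fintype.ofFinite κ
  simp only [fun t => linearMap_apply_eq_sum L (M t)]
  exact integrable_finsetSum _ fun i _ => integrable_finsetSum _ fun j _ => (hM i j).smul_const _

lemma integral_linearMap_apply [NormedSpace ℝ E] [CompleteSpace E]
    (hM : ∀ i j, Integrable (fun t => M t i j) ν) (L : Matrix ι κ 𝕜 →ₗ[𝕜] E) :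
    ∫ t, L (M t) ∂ν = L (Matrix.of fun i j => ∫ t, M t i j ∂ν) := by
  classical
  have := Fintype.ofFinite ι
  have := Fintype.ofFinite κ
  simp only [fun t => linearMap_apply_eq_sum L (M t), linearMap_apply_eq_sum L (of _),
    of_apply]
  rw [integral_finsetSum _ fun i _ => integrable_finsetSum _ fun j _ => (hM i j).smul_const _]
  refine Finset.sum_congr rfl fun i _ => ?_
  rw [integral_finsetSum _ fun j _ => (hM i j).smul_const _]
  exact Finset.sum_congr rfl fun j _ => integral_smul_const _ _

end EntrywiseIntegral

section HerglotzTransform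

variable {E : Type*} [NormedAddCommGroup E] [NormedSpace ℂ E] {ν : Measure ℂ} {φ : ℂ → E}
  {K : Set ℂ} {x z : ℂ}

/-- The Cauchy transform of the vector measure with density `φ` with respect to `ν`. -/
noncomputable def cauchyTransform (ν : Measure ℂ) (φ : ℂ → E) (z : ℂ) : E :=
  ∫ t, (t - z)⁻¹ • φ t ∂ν

/-- The Herglotz transform of the vector measure with density `φ` with respect to `ν`. -/
noncomputable def herglotzTransform (ν : Measure ℂ) (φ : ℂ → E) (z : ℂ) : E :=
  ∫ t, herglotzRieszKernel 0 z t • φ t ∂ν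

lemma exists_pos_forall_le_norm_sub (hK : IsClosed K) (hz : z ∉ K) :
    ∃ r > 0, ∀ t ∈ K, ∀ w ∈ ball z r, r ≤ ‖t - w‖ := by
  obtain ⟨ε, hε, hball⟩ := Metric.isOpen_iff.1 hK.isOpen_compl z hz
  refine ⟨ε / 2, half_pos hε, fun t ht w hw => ?_⟩
  have hzt : ε ≤ dist t z := not_lt.1 fun h => hball h ht
  rw [← dist_eq_norm]
  linarith [dist_triangle t w z, mem_ball.1 hw]

lemma integrable_inv_sub_smul (hφ : Integrable φ ν) (hK : IsClosed K)
    (hφK : ∀ᵐ t ∂ν, t ∉ K → φ t = 0) (hz : z ∉ K) :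
    Integrable (fun t => (t - z)⁻¹ • φ t) ν := by
  obtain ⟨r, hr, hrK⟩ := exists_pos_forall_le_norm_sub hK hz
  refine (hφ.norm.const_mul r⁻¹).mono' ?_ ?_
  · exact ((measurable_id.sub_const z).inv.aestronglyMeasurable).smul hφ.aestronglyMeasurable
  · filter_upwards [hφK] with t ht
    rw [norm_smul, norm_inv]
    by_cases htK : t ∈ K
    · gcongr
      exact hrK t htK z (mem_ball_self hr)
    · simp [ht htK]

lemma differentiableAt_cauchyTransform (hφ : Integrable φ ν) (hK : IsClosed K)
    (hφK : ∀ᵐ t ∂ν, t ∉ K → φ t = 0) (hz : z ∉ K) :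
    DifferentiableAt ℂ (cauchyTransform ν φ) z := by
  obtain ⟨r, hr, hrK⟩ := exists_pos_forall_le_norm_sub hK hz
  have meas (w : ℂ) : AEStronglyMeasurable (fun t : ℂ => (t - w)⁻¹) ν :=
    (measurable_id.sub_const w).inv.aestronglyMeasurable
  refine (hasDerivAt_integral_of_dominated_loc_of_deriv_le (F' := fun w t => ((t - w)⁻¹ ^ 2) • φ t)
    (bound := fun t => r⁻¹ ^ 2 * ‖φ t‖) (ball_mem_nhds z hr)
    (Eventually.of_forall fun w => (meas w).smul hφ.aestronglyMeasurable)
    (integrable_inv_sub_smul hφ hK hφK hz) (((meas z).pow 2).smul hφ.aestronglyMeasurable)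
    ?_ (hφ.norm.const_mul _) ?_).2.differentiableAt
  · filter_upwards [hφK] with t ht w hw
    rw [norm_smul, norm_pow, norm_inv]
    by_cases htK : t ∈ K
    · gcongr
      exact hrK t htK w hw
    · simp [ht htK]
  · filter_upwards [hφK] with t ht w hw
    by_cases htK : t ∈ K
    · have hne : t - w ≠ 0 := norm_pos_iff.1 (hr.trans_le (hrK t htK w hw))
      simpa using (((hasDerivAt_id w).const_sub t).inv hne).smul_const (φ t)
    · simpa [ht htK] using hasDerivAt_const w (0 : E)

lemma analyticAt_cauchyTransform [CompleteSpace E] (hφ : Integrable φ ν) (hK : IsClosed K)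
    (hφK : ∀ᵐ t ∂ν, t ∉ K → φ t = 0) (hz : z ∉ K) : AnalyticAt ℂ (cauchyTransform ν φ) z :=
  DifferentiableOn.analyticAt
    (fun _ hw => (differentiableAt_cauchyTransform hφ hK hφK hw).differentiableWithinAt)
    (hK.isOpen_compl.mem_nhds hz)

lemma meromorphicAt_cauchyTransform [CompleteSpace E] (hφ : Integrable φ ν) (hK : IsClosed K)
    (hφK : ∀ᵐ t ∂ν, t ∉ insert x K → φ t = 0) (hx : x ∉ K) :
    MeromorphicAt (cauchyTransform ν φ) x := by
  have hφK' : ∀ᵐ t ∂ν.restrict {x}ᶜ, t ∉ K → φ t = 0 := by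
    rw [ae_restrict_iff' (measurableSet_singleton x).compl]
    filter_upwards [hφK] with t ht htx htK using ht (not_or.2 ⟨htx, htK⟩)
  have atom : MeromorphicAt (fun z => ν.real {x} • (x - z)⁻¹ • φ x) x := by
    fun_prop
  have rest := (analyticAt_cauchyTransform hφ.integrableOn hK hφK' hx).meromorphicAt
  refine (atom.add rest).congr ?_
  filter_upwards [self_mem_nhdsWithin, nhdsWithin_le_nhds (hK.isOpen_compl.mem_nhds hx)]
    with z hzx hzK
  have hint := integrable_inv_sub_smul hφ (isClosed_singleton.union hK) hφK (not_or.2 ⟨hzx, hzK⟩)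
  rw [Pi.add_apply, cauchyTransform, cauchyTransform,
    ← integral_add_compl (measurableSet_singleton x) hint, integral_singleton]

lemma herglotzRieszKernel_smul_ae_eq (hφK : ∀ᵐ t ∂ν, t ∉ K → φ t = 0) (hz : z ∉ K) :
    (fun t => herglotzRieszKernel 0 z t • φ t) =ᵐ[ν]
      fun t => φ t + (2 * z) • (t - z)⁻¹ • φ t := by
  filter_upwards [hφK] with t ht
  obtain rfl | hne := eq_or_ne t z
  · simp [ht hz]
  · have : herglotzRieszKernel 0 z t = 1 + 2 * z * (t - z)⁻¹ := by
      rw [herglotzRieszKernel_def]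
      field_simp [sub_ne_zero.2 hne]
      ring
    rw [this, add_smul, one_smul, mul_smul]

lemma integrable_herglotzRieszKernel_smul (hφ : Integrable φ ν) (hK : IsClosed K)
    (hφK : ∀ᵐ t ∂ν, t ∉ K → φ t = 0) (hz : z ∉ K) :
    Integrable (fun t => herglotzRieszKernel 0 z t • φ t) ν :=
  (hφ.add ((integrable_inv_sub_smul hφ hK hφK hz).smul (2 * z))).congr
    (herglotzRieszKernel_smul_ae_eq hφK hz).symm

lemma herglotzTransform_eq_integral_add_smul_cauchyTransform (hφ : Integrable φ ν)
    (hK : IsClosed K) (hφK : ∀ᵐ t ∂ν, t ∉ K → φ t = 0) (hz : z ∉ K) :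
    herglotzTransform ν φ z = ∫ t, φ t ∂ν + (2 * z) • cauchyTransform ν φ z := by
  have hint : Integrable (fun t => (2 * z) • (t - z)⁻¹ • φ t) ν :=
    (integrable_inv_sub_smul hφ hK hφK hz).smul (2 * z)
  rw [herglotzTransform, integral_congr_ae (herglotzRieszKernel_smul_ae_eq hφK hz),
    integral_add hφ hint, integral_smul, cauchyTransform]

lemma analyticAt_herglotzTransform [CompleteSpace E] (hφ : Integrable φ ν) (hK : IsClosed K)
    (hφK : ∀ᵐ t ∂ν, t ∉ K → φ t = 0) (hz : z ∉ K) : AnalyticAt ℂ (herglotzTransform ν φ) z := by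
  have := analyticAt_cauchyTransform hφ hK hφK hz
  refine AnalyticAt.congr (f := fun z => ∫ t, φ t ∂ν + (2 * z) • cauchyTransform ν φ z)
    (by fun_prop) ?_
  filter_upwards [hK.isOpen_compl.mem_nhds hz] with w hw
  exact (herglotzTransform_eq_integral_add_smul_cauchyTransform hφ hK hφK hw).symm

lemma meromorphicAt_herglotzTransform [CompleteSpace E] (hφ : Integrable φ ν) (hK : IsClosed K)
    (hφK : ∀ᵐ t ∂ν, t ∉ insert x K → φ t = 0) (hx : x ∉ K) :
    MeromorphicAt (herglotzTransform ν φ) x := by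
  have := meromorphicAt_cauchyTransform hφ hK hφK hx
  refine MeromorphicAt.congr (f := fun z => ∫ t, φ t ∂ν + (2 * z) • cauchyTransform ν φ z)
    (by fun_prop) ?_
  filter_upwards [self_mem_nhdsWithin, nhdsWithin_le_nhds (hK.isOpen_compl.mem_nhds hx)]
    with w hwx hwK
  exact (herglotzTransform_eq_integral_add_smul_cauchyTransform hφ (isClosed_singleton.union hK) hφK
    (not_or.2 ⟨hwx, hwK⟩)).symm

end HerglotzTransform

section RadialPoint

variable {E : Type*} [NormedAddCommGroup E] [NormedSpace ℝ E] {y : E} {δ : ℝ}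

lemma norm_one_sub_smul (hy : ‖y‖ = 1) (hδ : δ ≤ 1) : ‖(1 - δ) • y‖ = 1 - δ := by
  rw [norm_smul, hy, mul_one, Real.norm_of_nonneg (sub_nonneg.2 hδ)]

lemma dist_one_sub_smul_self (hy : ‖y‖ = 1) (hδ : 0 ≤ δ) : dist ((1 - δ) • y) y = δ := by
  rw [dist_comm, dist_eq_norm, sub_smul, one_smul, sub_sub_cancel, norm_smul, hy, mul_one,
    Real.norm_of_nonneg hδ]

end RadialPoint

section HerglotzKernel

variable {t z : ℂ}

lemma re_herglotzRieszKernel_zero (z t : ℂ) :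
    (herglotzRieszKernel 0 z t).re = (‖t‖ ^ 2 - ‖z‖ ^ 2) / ‖t - z‖ ^ 2 := by
  simpa [poissonKernel_def] using
    (congrFun (poissonKernel_eq_re_herglotzRieszKernel (c := 0) (w := z)) t).symm

lemma re_herglotzRieszKernel_zero_nonneg (h : ‖z‖ ≤ ‖t‖) : 0 ≤ (herglotzRieszKernel 0 z t).re := by
  rw [re_herglotzRieszKernel_zero]
  have : ‖z‖ ^ 2 ≤ ‖t‖ ^ 2 := by gcongr
  exact div_nonneg (sub_nonneg.2 this) (by positivity)

lemma conj_herglotzRieszKernel_zero (h : ‖z‖ = ‖t‖) :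
    (starRingEnd ℂ) (herglotzRieszKernel 0 z t) = -herglotzRieszKernel 0 z t := by
  have hre : (herglotzRieszKernel 0 z t).re = 0 := by
    rw [re_herglotzRieszKernel_zero, h, sub_self, zero_div]
  exact Complex.ext (by simp [hre]) (by simp)

lemma inv_four_mul_le_re_herglotzRieszKernel_zero {y : ℂ} (hy : ‖y‖ = 1) (ht : ‖t‖ = 1) {δ : ℝ}
    (hδ : δ ∈ Ioo 0 1) (hty : t ∈ closedBall y δ) :
    (4 * δ)⁻¹ ≤ (herglotzRieszKernel 0 ((1 - δ : ℝ) • y) t).re := by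
  obtain ⟨hδ0, hδ1⟩ := hδ
  have norm_z := norm_one_sub_smul hy hδ1.le
  have dist_le : ‖t - (1 - δ : ℝ) • y‖ ≤ 2 * δ := by
    rw [← dist_eq_norm]
    linarith [dist_triangle_right t ((1 - δ : ℝ) • y) y, dist_one_sub_smul_self hy hδ0.le,
      mem_closedBall.1 hty]
  have dist_pos : 0 < ‖t - (1 - δ : ℝ) • y‖ := by
    linarith [norm_sub_norm_le t ((1 - δ : ℝ) • y)]
  rw [re_herglotzRieszKernel_zero, ht, norm_z]
  calc (4 * δ)⁻¹ = δ / (2 * δ) ^ 2 := by field_simp; norm_num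
    _ ≤ (1 ^ 2 - (1 - δ) ^ 2) / ‖t - (1 - δ : ℝ) • y‖ ^ 2 := by
      have : δ ≤ 1 ^ 2 - (1 - δ) ^ 2 := by nlinarith
      gcongr
      exact hδ0.le.trans this

end HerglotzKernel

section HerglotzTransformCircle

variable {ν : Measure ℂ} {z : ℂ}

lemma re_herglotzTransform_nonneg {φ : ℂ → ℂ} (hν : ∀ᵐ t ∂ν, ‖t‖ = 1) (hφ : 0 ≤ᵐ[ν] φ)
    (hz : ‖z‖ ≤ 1) : 0 ≤ (herglotzTransform ν φ z).re := by
  by_cases hint : Integrable (fun t => herglotzRieszKernel 0 z t • φ t) ν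
  · have hre := integral_re hint
    simp only [RCLike.re_to_complex] at hre
    rw [herglotzTransform, ← hre]
    refine integral_nonneg_of_ae ?_
    filter_upwards [hν, hφ] with t ht hφt
    obtain ⟨hre_nonneg, him⟩ := Complex.le_def.1 hφt
    rw [Pi.zero_apply, smul_eq_mul, mul_re, ← him, Pi.zero_apply, zero_im, mul_zero, sub_zero]
    exact mul_nonneg (re_herglotzRieszKernel_zero_nonneg (hz.trans_eq ht.symm)) hre_nonneg
  · rw [herglotzTransform, integral_undef hint, zero_re]

variable [IsFiniteMeasure ν]

lemma measureReal_closedBall_le_re_herglotzTransform (hν : ∀ᵐ t ∂ν, ‖t‖ = 1) {y : ℂ}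
    (hy : ‖y‖ = 1) {δ : ℝ} (hδ : δ ∈ Ioo 0 1) :
    ν.real (closedBall y δ) ≤ 4 * δ * (herglotzTransform ν (1 : ℂ → ℂ) ((1 - δ : ℝ) • y)).re := by
  set z : ℂ := (1 - δ : ℝ) • y
  have norm_z : ‖z‖ = 1 - δ := norm_one_sub_smul hy hδ.2.le
  have hint : Integrable (fun t => herglotzRieszKernel 0 z t) ν := by
    simpa using integrable_herglotzRieszKernel_smul (φ := fun _ => (1 : ℂ)) (K := sphere 0 1)
      (integrable_const 1) isClosed_sphere (hν.mono fun t ht hts => absurd (by simpa using ht) hts)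
      (z := z) (by simp [norm_z, hδ.1.ne'])
  have markov := mul_meas_ge_le_integral_of_nonneg (ε := (4 * δ)⁻¹) (μ := ν)
    (f := fun t => (herglotzRieszKernel 0 z t).re) (hν.mono fun t ht =>
      re_herglotzRieszKernel_zero_nonneg (by linarith [hδ.1])) hint.re
  have hre := integral_re hint
  simp only [RCLike.re_to_complex] at hre
  rw [hre, inv_mul_le_iff₀ (by linarith [hδ.1])] at markov
  calc ν.real (closedBall y δ) ≤ ν.real {t | (4 * δ)⁻¹ ≤ (herglotzRieszKernel 0 z t).re} := by
        refine ENNReal.toReal_mono (measure_ne_top ν _) (measure_mono_ae ?_)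
        filter_upwards [hν] with t ht hty
        exact inv_four_mul_le_re_herglotzRieszKernel_zero hy ht hδ hty
    _ ≤ _ := by simpa [herglotzTransform] using markov

lemma measure_closedBall_le_of_lipschitzOnWith_herglotzTransform (hν : ∀ᵐ t ∂ν, ‖t‖ = 1)
    {h : ℂ → ℂ} {L : NNReal} {s : Set ℂ} (hL : LipschitzOnWith L h s) {y : ℂ} (hy : ‖y‖ = 1)
    (hys : y ∈ s) (hre : (h y).re = 0) {δ : ℝ} (hδ : δ ∈ Ioo 0 1) (hδs : (1 - δ : ℝ) • y ∈ s)
    (heq : h ((1 - δ : ℝ) • y) = herglotzTransform ν (1 : ℂ → ℂ) ((1 - δ : ℝ) • y)) :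
    ν (closedBall y δ) ≤ ENNReal.ofReal (4 * L) * ENNReal.ofReal δ ^ (2 : ℝ) := by
  have re_le : (h ((1 - δ : ℝ) • y)).re ≤ L * δ :=
    calc (h ((1 - δ : ℝ) • y)).re = (h ((1 - δ : ℝ) • y) - h y).re := by rw [sub_re, hre, sub_zero]
      _ ≤ dist (h ((1 - δ : ℝ) • y)) (h y) := (re_le_norm _).trans_eq (dist_eq_norm _ _).symm
      _ ≤ L * dist ((1 - δ : ℝ) • y) y := hL.dist_le_mul _ hδs _ hys
      _ = L * δ := by rw [dist_one_sub_smul_self hy hδ.1.le]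
  rw [ENNReal.ofReal_rpow_of_pos hδ.1, ← ENNReal.ofReal_mul (by positivity),
    ← ofReal_measureReal]
  refine ENNReal.ofReal_le_ofReal ?_
  calc ν.real (closedBall y δ) ≤ 4 * δ * (h ((1 - δ : ℝ) • y)).re :=
        heq ▸ measureReal_closedBall_le_re_herglotzTransform hν hy hδ
    _ ≤ 4 * δ * (L * δ) := mul_le_mul_of_nonneg_left re_le (by linarith [hδ.1])
    _ = 4 * L * δ ^ (2 : ℝ) := by rw [Real.rpow_two]; ring

/-- Balls of radius `δ` centred on the circle near `y` have mass `O(δ²)`, too little for a set of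
dimension one to carry any mass. -/
lemma notMem_support_of_contDiffAt_herglotzTransform (hν : ∀ᵐ t ∂ν, ‖t‖ = 1) {y : ℂ} {h : ℂ → ℂ}
    (hh : ContDiffAt ℝ 1 h y)
    (heq : ∀ᶠ z in nhds y, ‖z‖ < 1 → h z = herglotzTransform ν (1 : ℂ → ℂ) z)
    (hre : ∀ᶠ z in nhds y, ‖z‖ = 1 → (h z).re = 0) : y ∉ ν.support := by
  obtain ⟨L, s, hs, hL⟩ := hh.exists_lipschitzOnWith
  obtain ⟨r, hr, hball⟩ := Metric.eventually_nhds_iff_ball.1 (heq.and (hre.and hs))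
  have closedBall_le : ∀ w ∈ sphere (0 : ℂ) 1 ∩ ball y (r / 2), ∀ δ ∈ Ioo 0 (min (r / 2) 1),
      ν (closedBall w δ) ≤ ENNReal.ofReal (4 * L) * ENNReal.ofReal δ ^ (2 : ℝ) := by
    rintro w ⟨hw, hwy⟩ δ ⟨hδ0, hδ⟩
    rw [mem_sphere_zero_iff_norm] at hw
    obtain ⟨hδr, hδ1⟩ := lt_min_iff.1 hδ
    have dist_lt : dist ((1 - δ : ℝ) • w) y < r := by
      linarith [dist_triangle ((1 - δ : ℝ) • w) w y, dist_one_sub_smul_self hw hδ0.le,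
        mem_ball.1 hwy]
    obtain ⟨-, hwre, hws⟩ := hball w (ball_subset_ball (half_le_self hr.le) hwy)
    obtain ⟨hδeq, -, hδs⟩ := hball _ dist_lt
    refine measure_closedBall_le_of_lipschitzOnWith_herglotzTransform hν hL hw hws (hwre hw)
      ⟨hδ0, hδ1⟩ hδs (hδeq ?_)
    rw [norm_one_sub_smul hw hδ1.le]
    exact sub_lt_self 1 hδ0
  have sphere_null : ν (sphere 0 1 ∩ ball y (r / 2)) = 0 :=
    measure_eq_zero_of_closedBall_le_of_dimH_lt (d := 2) ENNReal.ofReal_ne_top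
      (lt_min (half_pos hr) one_pos) closedBall_le
      ((dimH_mono inter_subset_left).trans_lt ((dimH_sphere_le_one 0 1).trans_lt (by norm_num)))
  refine Measure.notMem_support_iff_exists.2 ⟨ball y (r / 2), ball_mem_nhds y (half_pos hr), ?_⟩
  refine measure_mono_null_ae ?_ sphere_null
  filter_upwards [hν] with t ht hty using ⟨by simpa using ht, hty⟩

end HerglotzTransformCircle

namespace MatrixMeasure

open Matrix

variable {n : ℕ} (μ : MatrixMeasure n)

section TraceMeasure

lemma ae_norm_eq_one : ∀ᵐ t ∂μ.base, ‖t‖ = 1 := by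
  filter_upwards [mem_ae_iff.2 μ.circleSupp] with t ht using by simpa using ht

lemma integrable_trace_dens : Integrable (fun t => (μ.dens t).trace) μ.base :=
  integrable_linearMap_apply μ.dens_int (traceLinearMap (Fin n) ℂ ℂ)

lemma measurable_re_trace_dens : Measurable fun t => (μ.dens t).trace.re :=
  measurable_re.comp (Finset.measurable_sum _ fun i _ => μ.dens_meas i i)

lemma ae_trace_dens_nonneg : ∀ᵐ t ∂μ.base, 0 ≤ (μ.dens t).trace :=
  μ.dens_psd.mono fun _ ht => ht.trace_nonneg

/-- The scalar trace measure `tr μ`, which has the same null sets as `μ`. -/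
noncomputable def traceMeasure : Measure ℂ :=
  μ.base.withDensity fun t => ENNReal.ofReal (μ.dens t).trace.re

instance : IsFiniteMeasure μ.traceMeasure :=
  isFiniteMeasure_withDensity_ofReal μ.integrable_trace_dens.re.2

lemma ae_traceMeasure_norm_eq_one : ∀ᵐ t ∂μ.traceMeasure, ‖t‖ = 1 :=
  (withDensity_absolutelyContinuous _ _).ae_le μ.ae_norm_eq_one

lemma integral_traceMeasure (f : ℂ → ℂ) :
    ∫ t, f t ∂μ.traceMeasure = ∫ t, f t * (μ.dens t).trace ∂μ.base := by
  rw [traceMeasure, integral_withDensity_eq_integral_toReal_smul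
    μ.measurable_re_trace_dens.ennreal_ofReal (ae_of_all _ fun _ => ENNReal.ofReal_lt_top)]
  refine integral_congr_ae ?_
  filter_upwards [μ.ae_trace_dens_nonneg] with t ht
  rw [ENNReal.toReal_ofReal (Complex.nonneg_iff.1 ht).1, real_smul,
    ← Complex.eq_re_of_ofReal_le ht, mul_comm]

lemma trace_meas {A : Set ℂ} (hA : MeasurableSet A) :
    (μ.meas A).trace = μ.traceMeasure.real A := by
  have trace_eq : ∫ t in A, (μ.dens t).trace ∂μ.base = (μ.meas A).trace :=
    integral_linearMap_apply (fun i j => (μ.dens_int i j).integrableOn)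
      (traceLinearMap (Fin n) ℂ ℂ)
  have real_eq : ∫ t, A.indicator 1 t ∂μ.traceMeasure = (μ.traceMeasure.real A : ℂ) := by
    rw [integral_indicator hA]
    simp
  rw [← trace_eq, ← real_eq, integral_traceMeasure, ← integral_indicator hA]
  congr 1 with t
  by_cases ht : t ∈ A <;> simp [ht]

lemma traceMeasure_apply_eq_zero_iff {A : Set ℂ} (hA : MeasurableSet A) :
    μ.traceMeasure A = 0 ↔ ∀ᵐ t ∂μ.base.restrict A, μ.dens t = 0 := by
  rw [traceMeasure, withDensity_apply _ hA,
    lintegral_eq_zero_iff μ.measurable_re_trace_dens.ennreal_ofReal]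
  refine eventually_congr ?_
  filter_upwards [ae_restrict_of_ae μ.dens_psd] with t ht
  have htr := Complex.nonneg_iff.1 ht.trace_nonneg
  rw [Pi.zero_apply, ENNReal.ofReal_eq_zero, ← ht.trace_eq_zero_iff, Complex.ext_iff]
  exact ⟨fun h => ⟨le_antisymm h htr.1, htr.2.symm⟩, fun h => h.1.le⟩

lemma meas_eq_zero_iff {A : Set ℂ} (hA : MeasurableSet A) :
    μ.meas A = 0 ↔ μ.traceMeasure A = 0 := by
  refine ⟨fun h => ?_, fun h => ?_⟩
  · have := μ.trace_meas hA
    rw [h, trace_zero] at this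
    exact (measureReal_eq_zero_iff).1 (by exact_mod_cast this.symm)
  · ext i j
    refine integral_eq_zero_of_ae ?_
    filter_upwards [(μ.traceMeasure_apply_eq_zero_iff hA).1 h] with t ht
    simp [ht]

end TraceMeasure

section Support

lemma supp_eq_support : μ.supp = μ.traceMeasure.support := by
  ext x
  simp only [nhds_basis_ball.mem_measureSupport, supp, mem_ofPred_eq, ne_eq,
    μ.meas_eq_zero_iff measurableSet_ball, pos_iff_ne_zero]

lemma supp_subset_sphere : μ.supp ⊆ sphere 0 1 :=
  μ.supp_eq_support ▸ Measure.support_subset_of_isClosed isClosed_sphere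
    (μ.ae_traceMeasure_norm_eq_one.mono fun t ht => by simpa using ht)

lemma limitPts_subset_sphere : μ.limitPts ⊆ sphere 0 1 := fun _ hx =>
  closure_minimal (sdiff_subset.trans μ.supp_subset_sphere) isClosed_sphere hx

lemma ae_dens_eq_zero_of_notMem_supp : ∀ᵐ t ∂μ.base, t ∉ μ.supp → μ.dens t = 0 := by
  rw [supp_eq_support]
  exact (ae_restrict_iff' Measure.isOpen_compl_support.measurableSet).1
    ((μ.traceMeasure_apply_eq_zero_iff Measure.isOpen_compl_support.measurableSet).1
      Measure.measure_compl_support)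

end Support

section Caratheodory

variable {z : ℂ}

lemma cara_apply (z : ℂ) (i j : Fin n) :
    μ.cara z i j = herglotzTransform μ.base (fun t => μ.dens t i j) z := by
  simp [cara, herglotzTransform, herglotzRieszKernel_def]

lemma linearMap_cara (hz : ‖z‖ < 1) (L : Matrix (Fin n) (Fin n) ℂ →ₗ[ℂ] ℂ) :
    L (μ.cara z) = herglotzTransform μ.base (fun t => L (μ.dens t)) z := by
  have hint (i j : Fin n) : Integrable (fun t => (herglotzRieszKernel 0 z t • μ.dens t) i j)
      μ.base :=
    integrable_herglotzRieszKernel_smul (μ.dens_int i j) isClosed_sphere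
      (μ.ae_norm_eq_one.mono fun t ht hts => absurd (by simpa using ht) hts)
      (z := z) (K := sphere 0 1) (by simpa using hz.ne)
  simp only [herglotzTransform, ← map_smul, integral_linearMap_apply hint L]
  congr 1
  ext i j
  exact μ.cara_apply z i j

lemma trace_cara (hz : ‖z‖ < 1) :
    (μ.cara z).trace = herglotzTransform μ.traceMeasure (1 : ℂ → ℂ) z := by
  simpa [herglotzTransform, integral_traceMeasure] using
    μ.linearMap_cara hz (traceLinearMap (Fin n) ℂ ℂ)

lemma re_star_dotProduct_cara_mulVec_nonneg (hz : ‖z‖ < 1) (v : Fin n → ℂ) :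
    0 ≤ (star v ⬝ᵥ μ.cara z *ᵥ v).re := by
  let quadraticForm : Matrix (Fin n) (Fin n) ℂ →ₗ[ℂ] ℂ :=
    LinearMap.applyₗ v ∘ₗ LinearMap.applyₗ (star v) ∘ₗ toBilin'.toLinearMap
  have apply_eq (B : Matrix (Fin n) (Fin n) ℂ) : quadraticForm B = star v ⬝ᵥ B *ᵥ v :=
    toBilin'_apply' B (star v) v
  rw [← apply_eq, μ.linearMap_cara hz]
  refine re_herglotzTransform_nonneg μ.ae_norm_eq_one ?_ hz.le
  filter_upwards [μ.dens_psd] with t ht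
  exact (ht.dotProduct_mulVec_nonneg v).trans_eq (apply_eq _).symm

/-- This also holds at the points of the support, where an entry of `F` is either a convergent
integral or `0`. -/
lemma cara_mem_skewAdjoint (hz : ‖z‖ = 1) :
    μ.cara z ∈ skewAdjoint (Matrix (Fin n) (Fin n) ℂ) := by
  rw [skewAdjoint.mem_iff, star_eq_conjTranspose]
  ext i j
  rw [conjTranspose_apply, neg_apply, cara_apply, cara_apply, herglotzTransform, herglotzTransform,
    star_def, ← integral_conj, ← integral_neg]
  refine integral_congr_ae ?_
  filter_upwards [μ.ae_norm_eq_one, μ.dens_psd] with t ht hpsd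
  have hherm : (starRingEnd ℂ) (μ.dens t j i) = μ.dens t i j := hpsd.isHermitian.apply i j
  rw [smul_eq_mul, smul_eq_mul, map_mul, hherm, conj_herglotzRieszKernel_zero (hz.trans ht.symm),
    neg_mul]

lemma det_cara_add_one_ne_zero (hz : ‖z‖ ≤ 1) : (μ.cara z + 1).det ≠ 0 :=
  det_add_one_ne_zero_of_re_nonneg fun v => hz.lt_or_eq.elim
    (fun hlt => μ.re_star_dotProduct_cara_mulVec_nonneg hlt v)
    fun heq => (re_star_dotProduct_mulVec_eq_zero_of_mem_skewAdjoint
      (μ.cara_mem_skewAdjoint heq) v).ge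

lemma cara_mem_entrywiseSubring_analyticAt (hz : ‖z‖ < 1) :
    μ.cara ∈ entrywiseSubring (Fin n) (analyticAtSubring z) := fun i j => by
  simp only [cara_apply]
  exact analyticAt_herglotzTransform (μ.dens_int i j) isClosed_sphere
    (μ.ae_norm_eq_one.mono fun t ht hts => absurd (by simpa using ht) hts)
    (K := sphere 0 1) (by simpa using hz.ne)

lemma cara_mem_entrywiseSubring_meromorphicAt {x : ℂ} (hx : x ∉ μ.limitPts) :
    μ.cara ∈ entrywiseSubring (Fin n) (meromorphicAtSubring x) := fun i j => by
  simp only [cara_apply]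
  refine meromorphicAt_herglotzTransform (μ.dens_int i j) isClosed_closure ?_ hx
  filter_upwards [μ.ae_dens_eq_zero_of_notMem_supp] with t ht htx
  have : t ∉ μ.supp := fun h => htx <| or_iff_not_imp_left.2 fun hne => subset_closure ⟨h, hne⟩
  simp [ht this]

end Caratheodory

section Schur

variable {z x : ℂ}

lemma schur_eq_smul_cayley (z : ℂ) : μ.schur z = z⁻¹ • cayley (μ.cara z) := rfl

lemma smul_schur (hz : z ≠ 0) : z • μ.schur z = cayley (μ.cara z) := by
  rw [schur_eq_smul_cayley, smul_inv_smul₀ hz]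

lemma schur_mem_unitaryGroup (hz : ‖z‖ = 1) : μ.schur z ∈ unitaryGroup (Fin n) ℂ :=
  smul_mem_unitaryGroup (by simp [hz])
    (cayley_mem_unitaryGroup (μ.cara_mem_skewAdjoint hz) (μ.det_cara_add_one_ne_zero hz.le).isUnit)

lemma schur_mem_entrywiseSubring_analyticAt (hz : ‖z‖ < 1) (hz0 : z ≠ 0) :
    μ.schur ∈ entrywiseSubring (Fin n) (analyticAtSubring z) := by
  have hcara := μ.cara_mem_entrywiseSubring_analyticAt hz
  have hdet : AnalyticAt ℂ (fun w => (μ.cara w + 1).det) z :=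
    det_mem_of_mem_entrywiseSubring (add_mem hcara (one_mem _))
  exact smul_mem_entrywiseSubring (analyticAt_inv hz0)
    (cayley_mem_entrywiseSubring hcara (hdet.inv (μ.det_cara_add_one_ne_zero hz.le)))

lemma schur_mem_entrywiseSubring_meromorphicAt (hx : x ∉ μ.limitPts) :
    μ.schur ∈ entrywiseSubring (Fin n) (meromorphicAtSubring x) := by
  have hcara := μ.cara_mem_entrywiseSubring_meromorphicAt hx
  have hdet : MeromorphicAt (fun w => (μ.cara w + 1).det) x :=
    det_mem_of_mem_entrywiseSubring (add_mem hcara (one_mem _))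
  exact smul_mem_entrywiseSubring (MeromorphicAt.id x).inv
    (cayley_mem_entrywiseSubring hcara hdet.inv)

end Schur

section SchurExtension

variable {z x : ℂ}

/-- The Schur function with the values at its removable singularities outside `limitPts` corrected;
for each entry this is the meromorphic normal form. -/
noncomputable def schurExtension (z : ℂ) : Matrix (Fin n) (Fin n) ℂ :=
  Matrix.of fun i j => toMeromorphicNFOn (fun w => μ.schur w i j) μ.limitPtsᶜ z

lemma meromorphicOn_schur (i j : Fin n) :
    MeromorphicOn (fun z => μ.schur z i j) μ.limitPtsᶜ :=
  fun _ hx => μ.schur_mem_entrywiseSubring_meromorphicAt hx i j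

lemma eventually_schurExtension_eq_schur (hx : x ∉ μ.limitPts) :
    ∀ᶠ z in nhdsWithin x {x}ᶜ, μ.schurExtension z = μ.schur z := by
  have hij (i j : Fin n) : ∀ᶠ z in nhdsWithin x {x}ᶜ, μ.schurExtension z i j = μ.schur z i j :=
    (μ.meromorphicOn_schur i j).toMeromorphicNFOn_eq_self_on_nhdsNE hx
  filter_upwards [eventually_all.2 fun i => eventually_all.2 (hij i)] with z hz
  exact Matrix.ext hz

lemma schurExtension_eq_schur (hz : ‖z‖ < 1) (hz0 : z ≠ 0) : μ.schurExtension z = μ.schur z := by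
  have hzl : z ∉ μ.limitPts := fun h => hz.ne (by simpa using μ.limitPts_subset_sphere h)
  ext i j
  have han : AnalyticAt ℂ (fun w => μ.schur w i j) z :=
    μ.schur_mem_entrywiseSubring_analyticAt hz hz0 i j
  rw [schurExtension, of_apply,
    toMeromorphicNFOn_eq_toMeromorphicNFAt (μ.meromorphicOn_schur i j) hzl,
    toMeromorphicNFAt_eq_self.2 han.meromorphicNFAt]

lemma analyticAt_schurExtension_apply (hx : ‖x‖ = 1) (hxl : x ∉ μ.limitPts) (i j : Fin n) :
    AnalyticAt ℂ (fun z => μ.schurExtension z i j) x := by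
  refine analyticAt_of_meromorphicNFAt_of_frequently_norm_le (C := 1)
    (meromorphicNFOn_toMeromorphicNFOn _ _ hxl) ?_
  refine ((frequently_norm_eq_one hx).and_eventually
    (μ.eventually_schurExtension_eq_schur hxl)).mono fun z ⟨hz, heq⟩ => ?_
  exact (congrArg (‖· i j‖) heq).trans_le
    (entry_norm_bound_of_unitary (μ.schur_mem_unitaryGroup hz) i j)

lemma schurExtension_mem_unitaryGroup (hx : ‖x‖ = 1) (hxl : x ∉ μ.limitPts) :
    μ.schurExtension x ∈ unitaryGroup (Fin n) ℂ := by
  have hcont : ContinuousAt μ.schurExtension x := continuousAt_pi.2 fun i =>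
    continuousAt_pi.2 fun j => (μ.analyticAt_schurExtension_apply hx hxl i j).continuousAt
  refine isClosed_unitary.mem_of_frequently_of_tendsto ?_
    (hcont.tendsto.mono_left (nhdsWithin_le_nhds (s := {x}ᶜ)))
  refine ((frequently_norm_eq_one hx).and_eventually
    (μ.eventually_schurExtension_eq_schur hxl)).mono fun z ⟨hz, heq⟩ => ?_
  exact heq ▸ μ.schur_mem_unitaryGroup hz

end SchurExtension

section UnitaryContinuation

/-- Near `x`, the function `g` is an analytic continuation of the Schur function of `μ` from the
open disk that takes unitary values on the circle. -/
structure IsUnitaryContinuationAt (g : ℂ → Matrix (Fin n) (Fin n) ℂ) (x : ℂ) : Prop where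
  analyticAt_apply : ∀ i j, AnalyticAt ℂ (fun z => g z i j) x
  eventually_eq_schur : ∀ᶠ z in nhds x, ‖z‖ < 1 → g z = μ.schur z
  eventually_mem_unitaryGroup : ∀ᶠ z in nhds x, ‖z‖ = 1 → g z ∈ unitaryGroup (Fin n) ℂ

namespace IsUnitaryContinuationAt

variable {μ} {g : ℂ → Matrix (Fin n) (Fin n) ℂ} {x : ℂ}

lemma eventually (h : μ.IsUnitaryContinuationAt g x) :
    ∀ᶠ y in nhds x, μ.IsUnitaryContinuationAt g y := by
  have han := eventually_all.2 fun i => eventually_all.2 fun j =>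
    (h.analyticAt_apply i j).eventually_analyticAt
  filter_upwards [han, h.eventually_eq_schur.eventually_nhds,
    h.eventually_mem_unitaryGroup.eventually_nhds] with y hy hy' hy'' using ⟨hy, hy', hy''⟩

lemma smul_mem_entrywiseSubring_analyticAt (h : μ.IsUnitaryContinuationAt g x) :
    (fun z => z • g z) ∈ entrywiseSubring (Fin n) (analyticAtSubring x) :=
  smul_mem_entrywiseSubring analyticAt_id h.analyticAt_apply

lemma analyticAt_det_one_sub_smul (h : μ.IsUnitaryContinuationAt g x) :
    AnalyticAt ℂ (fun z => (1 - z • g z).det) x :=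
  det_mem_of_mem_entrywiseSubring (sub_mem (one_mem _) h.smul_mem_entrywiseSubring_analyticAt)

lemma eventually_smul_eq_cayley (h : μ.IsUnitaryContinuationAt g x) (hx : x ≠ 0) :
    ∀ᶠ z in nhds x, ‖z‖ < 1 → z • g z = cayley (μ.cara z) := by
  filter_upwards [h.eventually_eq_schur, eventually_ne_nhds hx] with z hz hz0 hlt
  rw [hz hlt, μ.smul_schur hz0]

lemma notMem_supp (h : μ.IsUnitaryContinuationAt g x) (hx : x ≠ 0)
    (hdet : (1 - x • g x).det ≠ 0) : x ∉ μ.supp := by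
  have htrace : AnalyticAt ℂ (fun z => (invCayley (z • g z)).trace) x :=
    trace_mem_of_mem_entrywiseSubring (invCayley_mem_entrywiseSubring
      h.smul_mem_entrywiseSubring_analyticAt (h.analyticAt_det_one_sub_smul.inv hdet))
  rw [supp_eq_support]
  refine notMem_support_of_contDiffAt_herglotzTransform μ.ae_traceMeasure_norm_eq_one
    (htrace.contDiffAt.restrict_scalars ℝ) ?_ ?_
  · filter_upwards [h.eventually_smul_eq_cayley hx] with z hz hlt
    rw [hz hlt, invCayley_cayley (μ.det_cara_add_one_ne_zero hlt.le).isUnit, μ.trace_cara hlt]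
  · filter_upwards [h.eventually_mem_unitaryGroup,
      h.analyticAt_det_one_sub_smul.continuousAt.eventually_ne hdet] with z hz hdetz hnorm
    exact re_trace_eq_zero_of_mem_skewAdjoint
      (invCayley_mem_skewAdjoint (smul_mem_unitaryGroup hnorm (hz hnorm)) hdetz.isUnit)

lemma eventually_det_one_sub_smul_ne_zero (h : μ.IsUnitaryContinuationAt g x) (hx : ‖x‖ = 1) :
    ∀ᶠ z in nhdsWithin x {x}ᶜ, (1 - z • g z).det ≠ 0 := by
  have hx0 : x ≠ 0 := norm_ne_zero_iff.1 (by simp [hx])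
  refine h.analyticAt_det_one_sub_smul.eventually_eq_zero_or_eventually_ne_zero.resolve_left
    fun hzero => ?_
  obtain ⟨z, hz, hcayley, hdet⟩ := ((frequently_norm_lt_one hx).and_eventually
    ((h.eventually_smul_eq_cayley hx0).and hzero)).exists
  rw [hcayley hz] at hdet
  exact (isUnit_det_one_sub_cayley (μ.det_cara_add_one_ne_zero hz.le).isUnit).ne_zero hdet

lemma notMem_limitPts (h : μ.IsUnitaryContinuationAt g x) (hx : ‖x‖ = 1) : x ∉ μ.limitPts := by
  intro hlim
  obtain ⟨y, ⟨hy, hyx⟩, hcont, hdet⟩ := ((mem_closure_iff_frequently.1 hlim).and_eventually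
    (h.eventually.and
      (eventually_nhdsWithin_iff.1 (h.eventually_det_one_sub_smul_ne_zero hx)))).exists
  exact hcont.notMem_supp (ne_of_mem_sphere (μ.supp_subset_sphere hy) one_ne_zero) (hdet hyx) hy

end IsUnitaryContinuationAt

end UnitaryContinuation

end MatrixMeasure

theorem statement0_general {n : ℕ} (μ : MatrixMeasure n) {V : Set ℂ} (hV : IsOpen V) :
    sphere 0 1 ∩ V ∩ μ.limitPts = ∅ ↔
      ∃ (U : Set ℂ) (g : ℂ → Matrix (Fin n) (Fin n) ℂ), IsOpen U ∧ sphere 0 1 ∩ V ⊆ U ∧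
        (∀ i j, AnalyticOnNhd ℂ (fun z => g z i j) U) ∧
        (∀ z ∈ U, ‖z‖ < 1 → z ≠ 0 → g z = μ.schur z) ∧
        (∀ z ∈ sphere 0 1 ∩ V, g z ∈ Matrix.unitaryGroup (Fin n) ℂ) := by
  simp only [← disjoint_iff_inter_eq_empty, disjoint_left, mem_inter_iff, mem_sphere_zero_iff_norm,
    and_imp]
  constructor
  · intro hdisj
    refine ⟨⋂ i, ⋂ j, {x | AnalyticAt ℂ (fun z => μ.schurExtension z i j) x}, μ.schurExtension,
      isOpen_iInter_of_finite fun i => isOpen_iInter_of_finite fun j => isOpen_analyticAt ℂ _,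
      fun x hx => mem_iInter₂.2 fun i j => ?_, fun i j x hx => mem_iInter₂.1 hx i j,
      fun z _ => μ.schurExtension_eq_schur, fun x hx hxV =>
        μ.schurExtension_mem_unitaryGroup hx (hdisj hx hxV)⟩
    have hx1 : ‖x‖ = 1 := by simpa using hx.1
    exact μ.analyticAt_schurExtension_apply hx1 (hdisj hx1 hx.2) i j
  · rintro ⟨U, g, hU, hVU, han, heq, hunitary⟩ x hx hxV
    have hxU : x ∈ U := hVU ⟨by simpa using hx, hxV⟩
    have hcont : μ.IsUnitaryContinuationAt g x := by
      refine ⟨fun i j => han i j x hxU, ?_, ?_⟩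
      · filter_upwards [hU.mem_nhds hxU, eventually_ne_nhds (norm_ne_zero_iff.1 (by simp [hx]))]
          with z hzU hz0 hz using heq z hzU hz hz0
      · filter_upwards [hV.mem_nhds hxV] with z hzV hz using hunitary z hz hzV
    exact hcont.notMem_limitPts hx

/-- For a normalized matrix measure `μ` on the unit circle with Schur
function `f`, an open arc `Γ ⊆ 𝕋` is disjoint from the set of limit points of `supp μ`
if and only if `f` has an analytic continuation to a neighbourhood of `Γ` which takes
unitary values on `Γ`. -/
theorem statement0 {n : ℕ} (μ : MatrixMeasure n) (hnorm : μ.meas Set.univ = 1)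
    (Γ : Set ℂ) (hΓ : IsOpenArc Γ) :
    Γ ∩ μ.limitPts = ∅ ↔
      ∃ (U : Set ℂ) (g : ℂ → Matrix (Fin n) (Fin n) ℂ), IsOpen U ∧ Γ ⊆ U ∧
        (∀ i j, AnalyticOnNhd ℂ (fun z => g z i j) U) ∧
        (∀ z ∈ U, ‖z‖ < 1 → z ≠ 0 → g z = μ.schur z) ∧
        (∀ z ∈ Γ, g z ∈ Matrix.unitaryGroup (Fin n) ℂ) := by
  obtain ⟨V, hV, rfl⟩ := hΓ.exists_isOpen_sphere_inter
  exact statement0_general μ hV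
end

section
/- Let s, s̃ ∈ (−1,1), θ = arcsin s, θ̃ = arcsin s̃, and define Δ(z) = (1−z²)² + 4z(s+s̃z)(sz+s̃) and f(z) = (z² − 1 + √Δ(z)) / (2z(s + s̃z)), with the branch of √Δ analytic near 0 normalized by √Δ(z) → 1 as z → 0. Then f defines an analytic function on the open unit disk 𝔻 with |f(z)| ≤ 1 (the apparent singularities being removable), f satisfies the fixed-point relation of the Schur algorithm f = T_s T_{s̃} f, i.e. (1/z)(f(z)−s̃)/(1−s̃ f(z)) = (z f(z) + s)/(1 + s z f(z)), and: if θ̃ + θ ≠ 0 then f extends analytically to a neighbourhood of 1, with |f| = 1 on an open arc of 𝕋 containing 1, and f(1) = |s̃+s|/(s̃+s) = sgn(θ̃+θ); if θ̃ − θ ≠ 0 then f extends analytically to a neighbourhood of −1, with |f| = 1 on an open arc of 𝕋 containing −1, and f(−1) = |s̃−s|/(s̃−s) = sgn(θ̃−θ). Conversely, if θ̃ + θ = 0 (resp. θ̃ − θ = 0) then f has no analytic continuation to a neighbourhood of 1 (resp. −1) unitary on an arc of 𝕋 around that point. -/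
open Complex Filter Set Metric

/-! Write `s = sin θ` and `s̃ = sin θ̃`. Then `Δ` is the product of the two real quadratics
`1 - 2 cos (θ̃ + θ) z + z²` and `1 + 2 cos (θ̃ - θ) z + z²`, each of which has positive real part on
the unit disk after division by `1 - z²`. Hence principal square roots of the factors give an
analytic `√Δ` there, and `1 - z² + √Δ` never vanishes, so that `f = 2 (s̃ + s z) / (1 - z² + √Δ)`
has no singularities in the disk.

The function `f` solves a quadratic equation equivalent to `f = T_s T_{s̃} f`. In the disk this
equation has no unimodular solution, and `|f(0)| = |s̃| < 1`, so `|f| ≤ 1` by connectedness. At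
`e = ±1` one has `Δ(e) = 4 (s̃ + e s)²`. If this is nonzero, then `√Δ` continues across `e`, and the
quadratic equation has only unimodular solutions on the unit circle near `e`. If `s̃ + e s = 0`,
then the equation loses the factor `1 - e z`, and the remaining equation has no unimodular solution
at `e`. -/

/-- The polynomial `(1 - e^{iφ} z) (1 - e^{-iφ} z)`, written in terms of `c = cos φ`. -/
noncomputable def cosQuadratic (c : ℝ) (z : ℂ) : ℂ := 1 - 2 * c * z + z ^ 2

/-- The radicand `Δ` of the Schur function with 2-periodic Schur parameters `(t, s, t, s, …)`. -/
def schurDiscr (s t z : ℂ) : ℂ := (1 - z ^ 2) ^ 2 + 4 * z * (s + t * z) * (s * z + t)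

/-- The fixed-point equation `w = T_s T_t w` at the point `z`, for real `s` and `t`, with
denominators cleared and all terms on one side. -/
def schurQuadratic (s t z w : ℂ) : ℂ := z * (s + t * z) * w ^ 2 + (1 - z ^ 2) * w - (t + s * z)

/-- The branch of `√Δ` for the Schur parameters `s = sin θ`, `s̃ = sin θt`, obtained by taking
principal square roots of the two quadratic factors of `Δ`. -/
noncomputable def schurSqrt (θ θt : ℝ) (z : ℂ) : ℂ :=
  Complex.sqrt (cosQuadratic (Real.cos (θt + θ)) z) *
    Complex.sqrt (cosQuadratic (-Real.cos (θt - θ)) z)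

/-- The Schur function with 2-periodic Schur parameters `(sin θt, sin θ, sin θt, sin θ, …)`. The
numerator of `(z² - 1 + √Δ) / (2z(s + s̃z))` is rationalised, so that the formula is also correct
at the removable singularities. -/
noncomputable def schurFun (θ θt : ℝ) (z : ℂ) : ℂ :=
  2 * (Real.sin θt + Real.sin θ * z) / (1 - z ^ 2 + schurSqrt θ θt z)

/-- `g` is an analytic continuation of `f` from the unit disk to a neighbourhood `V` of `ζ`, and is
unitary on an arc of the unit circle around `ζ`. -/
def IsUnitaryContinuation (f g : ℂ → ℂ) (V : Set ℂ) (ζ : ℂ) : Prop :=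
  IsOpen V ∧ ζ ∈ V ∧ AnalyticOnNhd ℂ g V ∧ (∀ z ∈ V ∩ ball (0 : ℂ) 1, g z = f z) ∧
    ∃ Γ : Set ℂ, IsOpenArc Γ ∧ ζ ∈ Γ ∧ Γ ⊆ V ∧ ∀ z ∈ Γ, ‖g z‖ = 1

lemma complexSqrt_sq (z : ℂ) : Complex.sqrt z ^ 2 = z :=
  cpow_ofNat_inv_pow z 2

lemma re_complexSqrt_pos {z : ℂ} (hz : z ∈ slitPlane) : 0 < (Complex.sqrt z).re := by
  rw [Complex.sqrt, cpow_inv_two_re, Real.sqrt_pos]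
  rcases mem_slitPlane_iff.mp hz with h_re | h_im
  · linarith [norm_nonneg z]
  · linarith [neg_abs_le z.re, abs_re_lt_norm.mpr h_im]

lemma mem_slitPlane_of_re_mul_conj_pos {z w : ℂ} (hw : 0 < w.re)
    (hzw : 0 < (z * starRingEnd ℂ w).re) : z ∈ slitPlane := by
  rw [mem_slitPlane_iff]
  by_contra! hz
  simp only [mul_re, conj_re, conj_im, hz.2] at hzw
  nlinarith

/-- The sum of `Re (p * r)` and `Re (p * conj r)` is `2 * Re p * Re r`, so both cannot be
negative. -/
lemma add_mul_ne_zero_of_re_pos {d p r : ℂ} (hd : 0 < d.re) (hp : 0 < p.re) (hr : 0 < r.re)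
    (hpd : 0 < (p ^ 2 * starRingEnd ℂ d).re) : d + p * r ≠ 0 := by
  intro h
  obtain rfl : d = -(p * r) := eq_neg_of_add_eq_zero_left h
  have hconj : (p ^ 2 * starRingEnd ℂ (-(p * r))).re = -(normSq p * (p * starRingEnd ℂ r).re) := by
    simp only [normSq_apply, pow_two, mul_re, mul_im, neg_re, neg_im, conj_re, conj_im]
    ring
  have h_neg : (p * starRingEnd ℂ r).re < 0 := by
    rw [hconj] at hpd
    nlinarith [normSq_nonneg p]
  simp only [neg_re, mul_re, conj_re, conj_im] at hd h_neg
  nlinarith [mul_pos hp hr]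

lemma one_sub_sq_re_pos {z : ℂ} (hz : ‖z‖ < 1) : 0 < (1 - z ^ 2).re := by
  have : (z ^ 2).re < 1 := (re_le_norm _).trans_lt <| by
    rw [norm_pow]; exact pow_lt_one₀ (norm_nonneg z) hz two_ne_zero
  simpa using this

lemma re_cosQuadratic_mul_conj_pos {c : ℝ} (hc : |c| ≤ 1) {z : ℂ} (hz : ‖z‖ < 1) :
    0 < (cosQuadratic c z * starRingEnd ℂ (1 - z ^ 2)).re := by
  have h_re : (cosQuadratic c z * starRingEnd ℂ (1 - z ^ 2)).re =
      (1 - ‖z‖ ^ 2) * (1 + ‖z‖ ^ 2 - 2 * (c * z.re)) := by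
    rw [cosQuadratic, Complex.sq_norm, normSq_apply]
    simp only [pow_two, mul_re, mul_im, add_re, add_im, sub_re, sub_im, conj_re, conj_im, one_re,
      one_im, ofReal_re, ofReal_im, re_ofNat, im_ofNat]
    ring
  have hcz : c * z.re ≤ ‖z‖ := calc
    c * z.re ≤ |c| * |z.re| := (le_abs_self _).trans_eq (abs_mul _ _)
    _ ≤ 1 * ‖z‖ := by gcongr; exact abs_re_le_norm z
    _ = ‖z‖ := one_mul _
  rw [h_re]
  apply mul_pos <;> nlinarith [norm_nonneg z]

lemma cosQuadratic_mem_slitPlane {c : ℝ} (hc : |c| ≤ 1) {z : ℂ} (hz : ‖z‖ < 1) :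
    cosQuadratic c z ∈ slitPlane :=
  mem_slitPlane_of_re_mul_conj_pos (one_sub_sq_re_pos hz) (re_cosQuadratic_mul_conj_pos hc hz)

lemma cosQuadratic_ofReal (c : ℝ) {e : ℝ} (he : e ^ 2 = 1) :
    cosQuadratic c e = (2 * (1 - e * c) : ℝ) := by
  have heC : (e : ℂ) ^ 2 = 1 := by exact_mod_cast he
  rw [cosQuadratic, heC]
  push_cast
  ring

lemma abs_eq_one_of_sq_eq_one {e : ℝ} (he : e ^ 2 = 1) : |e| = 1 :=
  (pow_eq_one_iff_of_nonneg (abs_nonneg e) two_ne_zero).mp ((sq_abs e).trans he)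

lemma two_mul_one_sub_mul_nonneg {c e : ℝ} (hc : |c| ≤ 1) (he : e ^ 2 = 1) :
    0 ≤ 2 * (1 - e * c) := by
  have : e * c ≤ 1 := (le_abs_self _).trans <| by rwa [abs_mul, abs_eq_one_of_sq_eq_one he, one_mul]
  linarith

lemma cosQuadratic_ofReal_mem_slitPlane {c e : ℝ} (hc : |c| ≤ 1) (he : e ^ 2 = 1)
    (hne : cosQuadratic c e ≠ 0) : cosQuadratic c e ∈ slitPlane := by
  rw [cosQuadratic_ofReal c he] at hne ⊢
  rw [ofReal_mem_slitPlane]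
  exact (two_mul_one_sub_mul_nonneg hc he).lt_of_ne' (ofReal_ne_zero.mp hne)

lemma analyticAt_sqrt_cosQuadratic {c : ℝ} {z : ℂ} (hz : cosQuadratic c z ∈ slitPlane) :
    AnalyticAt ℂ (fun z => Complex.sqrt (cosQuadratic c z)) z := by
  have h_poly : AnalyticAt ℂ (cosQuadratic c) z := by unfold cosQuadratic; fun_prop
  exact h_poly.cpow analyticAt_const hz

lemma schurDiscr_sin (θ θt : ℝ) (z : ℂ) :
    schurDiscr (Real.sin θ) (Real.sin θt) z =
      cosQuadratic (Real.cos (θt + θ)) z * cosQuadratic (-Real.cos (θt - θ)) z := by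
  have hθ := Complex.sin_sq_add_cos_sq θ
  have hθt := Complex.sin_sq_add_cos_sq θt
  simp only [schurDiscr, cosQuadratic, Real.cos_add, Real.cos_sub]
  push_cast
  linear_combination (4 * z ^ 2) * ((1 - Complex.sin θt ^ 2) * hθ + Complex.cos θ ^ 2 * hθt)

lemma schurDiscr_ofReal (s t : ℝ) {e : ℝ} (he : e ^ 2 = 1) :
    schurDiscr s t e = (4 * (t + e * s) ^ 2 : ℝ) := by
  have heC : (e : ℂ) ^ 2 = 1 := by exact_mod_cast he
  rw [schurDiscr]
  push_cast
  linear_combination ((e : ℂ) ^ 2 - 1 + 4 * t ^ 2 + 4 * s * t * e) * heC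

section SchurSqrt

variable (θ θt : ℝ)

lemma schurSqrt_sq (z : ℂ) :
    schurSqrt θ θt z ^ 2 = schurDiscr (Real.sin θ) (Real.sin θt) z := by
  rw [schurSqrt, mul_pow, complexSqrt_sq, complexSqrt_sq, schurDiscr_sin]

lemma schurSqrt_zero : schurSqrt θ θt 0 = 1 := by
  simp [schurSqrt, cosQuadratic]

lemma abs_neg_cos_le_one (x : ℝ) : |-Real.cos x| ≤ 1 :=
  (abs_neg _).trans_le (Real.abs_cos_le_one x)

lemma analyticAt_schurSqrt {z : ℂ} (hz : ‖z‖ < 1) : AnalyticAt ℂ (schurSqrt θ θt) z :=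
  (analyticAt_sqrt_cosQuadratic (cosQuadratic_mem_slitPlane (Real.abs_cos_le_one _) hz)).mul
    (analyticAt_sqrt_cosQuadratic (cosQuadratic_mem_slitPlane (abs_neg_cos_le_one _) hz))

lemma one_sub_sq_add_schurSqrt_ne_zero {z : ℂ} (hz : ‖z‖ < 1) :
    1 - z ^ 2 + schurSqrt θ θt z ≠ 0 := by
  have h_add : |Real.cos (θt + θ)| ≤ 1 := Real.abs_cos_le_one _
  refine add_mul_ne_zero_of_re_pos (one_sub_sq_re_pos hz)
    (re_complexSqrt_pos (cosQuadratic_mem_slitPlane h_add hz))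
    (re_complexSqrt_pos (cosQuadratic_mem_slitPlane (abs_neg_cos_le_one _) hz)) ?_
  rw [complexSqrt_sq]
  exact re_cosQuadratic_mul_conj_pos h_add hz

variable {θ θt} {e : ℝ}

lemma analyticAt_schurSqrt_ofReal (he : e ^ 2 = 1) (hne : Real.sin θt + e * Real.sin θ ≠ 0) :
    AnalyticAt ℂ (schurSqrt θ θt) e := by
  have h_discr : schurDiscr (Real.sin θ) (Real.sin θt) e ≠ 0 := by
    rw [schurDiscr_ofReal _ _ he, ofReal_ne_zero]
    positivity
  rw [schurDiscr_sin] at h_discr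
  obtain ⟨h_add, h_sub⟩ := mul_ne_zero_iff.mp h_discr
  exact (analyticAt_sqrt_cosQuadratic
      (cosQuadratic_ofReal_mem_slitPlane (Real.abs_cos_le_one _) he h_add)).mul
    (analyticAt_sqrt_cosQuadratic
      (cosQuadratic_ofReal_mem_slitPlane (abs_neg_cos_le_one _) he h_sub))

lemma schurSqrt_ofReal (he : e ^ 2 = 1) :
    schurSqrt θ θt e = (2 * |Real.sin θt + e * Real.sin θ| : ℝ) := by
  have h_discr := schurDiscr_ofReal (Real.sin θ) (Real.sin θt) he
  have h_sqrt (c : ℝ) (hc : |c| ≤ 1) :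
      Complex.sqrt (cosQuadratic c e) = (√(2 * (1 - e * c)) : ℝ) := by
    rw [cosQuadratic_ofReal c he, Complex.sqrt_of_nonneg, ofReal_re]
    exact_mod_cast two_mul_one_sub_mul_nonneg hc he
  rw [schurDiscr_sin, cosQuadratic_ofReal _ he, cosQuadratic_ofReal _ he, ← ofReal_mul,
    ofReal_inj] at h_discr
  rw [schurSqrt, h_sqrt _ (Real.abs_cos_le_one _), h_sqrt _ (abs_neg_cos_le_one _), ← ofReal_mul,
    ← Real.sqrt_mul (two_mul_one_sub_mul_nonneg (Real.abs_cos_le_one _) he), h_discr,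
    show 4 * (Real.sin θt + e * Real.sin θ) ^ 2 = (2 * (Real.sin θt + e * Real.sin θ)) ^ 2 by ring,
    Real.sqrt_sq_eq_abs, abs_mul, abs_two]

end SchurSqrt

lemma schurQuadratic_eq_zero_iff {s t z w : ℂ} :
    schurQuadratic s t z w = 0 ↔ (w - t) * (1 + s * z * w) = z * (z * w + s) * (1 - t * w) := by
  rw [schurQuadratic]
  constructor <;> intro h <;> linear_combination h

lemma two_mul_mul_div_eq {s t z σ : ℂ} (hσ : σ ^ 2 = schurDiscr s t z) (hne : 1 - z ^ 2 + σ ≠ 0) :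
    2 * z * (s + t * z) * (2 * (t + s * z) / (1 - z ^ 2 + σ)) = z ^ 2 - 1 + σ := by
  rw [schurDiscr] at hσ
  field_simp
  linear_combination -hσ

lemma schurQuadratic_div_eq_zero {s t z σ : ℂ} (hσ : σ ^ 2 = schurDiscr s t z)
    (hne : 1 - z ^ 2 + σ ≠ 0) : schurQuadratic s t z (2 * (t + s * z) / (1 - z ^ 2 + σ)) = 0 := by
  have h_mul := two_mul_mul_div_eq hσ hne
  have h_div := div_mul_cancel₀ (2 * (t + s * z)) hne
  generalize 2 * (t + s * z) / (1 - z ^ 2 + σ) = w at h_mul h_div ⊢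
  rw [schurQuadratic]
  linear_combination (w * h_mul + h_div) / 2

lemma norm_sq_one_add_conj_mul_sub_norm_sq_add (a w : ℂ) :
    ‖1 + starRingEnd ℂ a * w‖ ^ 2 - ‖w + a‖ ^ 2 = (1 - ‖a‖ ^ 2) * (1 - ‖w‖ ^ 2) := by
  simp only [Complex.sq_norm, normSq_apply, add_re, add_im, mul_re, mul_im, conj_re, conj_im,
    one_re, one_im]
  ring

lemma norm_add_eq_norm_one_add_conj_mul (a : ℂ) {w : ℂ} (hw : ‖w‖ = 1) :
    ‖w + a‖ = ‖1 + starRingEnd ℂ a * w‖ := by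
  have := norm_sq_one_add_conj_mul_sub_norm_sq_add a w
  rw [hw, one_pow, sub_self, mul_zero, sub_eq_zero] at this
  exact ((sq_eq_sq₀ (norm_nonneg _) (norm_nonneg _)).mp this).symm

lemma norm_add_lt_norm_one_add_conj_mul {a w : ℂ} (ha : ‖a‖ < 1) (hw : ‖w‖ < 1) :
    ‖w + a‖ < ‖1 + starRingEnd ℂ a * w‖ := by
  have ha' : 0 < 1 - ‖a‖ ^ 2 := sub_pos.mpr (pow_lt_one₀ (norm_nonneg a) ha two_ne_zero)
  have hw' : 0 < 1 - ‖w‖ ^ 2 := sub_pos.mpr (pow_lt_one₀ (norm_nonneg w) hw two_ne_zero)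
  refine lt_of_pow_lt_pow_left₀ 2 (norm_nonneg _) (sub_pos.mp ?_)
  rw [norm_sq_one_add_conj_mul_sub_norm_sq_add]
  exact mul_pos ha' hw'

/-- For unimodular `w`, the fixed-point equation would equate the modulus `1` of
`(w - t) / (1 - t * w)` with that of `z * (z * w + s) / (1 + s * z * w)`, which is less than `1`. -/
lemma norm_ne_one_of_schurQuadratic_eq_zero {s t : ℝ} (hs : |s| < 1) (ht : |t| < 1) {z w : ℂ}
    (hz : ‖z‖ < 1) (h : schurQuadratic s t z w = 0) : ‖w‖ ≠ 1 := by
  intro hw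
  have h_left : ‖w - t‖ = ‖1 - t * w‖ := by
    simpa [← sub_eq_add_neg] using norm_add_eq_norm_one_add_conj_mul (-t : ℂ) hw
  have h_right : ‖z * w + s‖ < ‖1 + s * z * w‖ := by
    have hzw : ‖z * w‖ < 1 := by rwa [norm_mul, hw, mul_one]
    simpa [mul_assoc] using
      norm_add_lt_norm_one_add_conj_mul (a := s) (by simpa using hs) hzw
  have h_pos : 0 < ‖1 - t * w‖ := by
    rw [← h_left, norm_sub_pos_iff]
    rintro rfl
    simp [ht.ne] at hw
  have h_norm := congrArg norm (schurQuadratic_eq_zero_iff.mp h)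
  rw [norm_mul, norm_mul, norm_mul, h_left, mul_comm] at h_norm
  refine h_right.not_ge ?_
  rw [mul_right_cancel₀ h_pos.ne' h_norm]
  exact mul_le_of_le_one_left (norm_nonneg _) hz.le

lemma norm_le_one_of_schurQuadratic_eq_zero {s t : ℝ} (hs : |s| < 1) (ht : |t| < 1)
    {f : ℂ → ℂ} (hf : ContinuousOn f (ball 0 1))
    (hq : ∀ z ∈ ball (0 : ℂ) 1, schurQuadratic s t z (f z) = 0) :
    ∀ z ∈ ball (0 : ℂ) 1, ‖f z‖ ≤ 1 := by
  intro z hz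
  by_contra! h_gt
  have h_mem : (0 : ℂ) ∈ ball (0 : ℂ) 1 := mem_ball_self one_pos
  have h_zero : f 0 = t := by simpa [schurQuadratic, sub_eq_zero] using hq 0 h_mem
  have h_le : ‖f 0‖ ≤ 1 := by simpa [h_zero] using ht.le
  obtain ⟨w, hw, hw_one⟩ :=
    (convex_ball (0 : ℂ) 1).isPreconnected.intermediate_value h_mem hz hf.norm ⟨h_le, h_gt.le⟩
  exact norm_ne_one_of_schurQuadratic_eq_zero hs ht (mem_ball_zero_iff.mp hw) (hq w hw) hw_one

/-- Completing the square, `α * w - y * I` is a square root of `‖α‖ ^ 2 - y ^ 2 > 0`, hence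
real. -/
lemma norm_eq_one_of_quadratic_eq_zero {α w : ℂ} {y : ℝ} (hy : |y| < ‖α‖)
    (h : α * w ^ 2 - 2 * y * I * w - starRingEnd ℂ α = 0) : ‖w‖ = 1 := by
  have h_pos : 0 < ‖α‖ ^ 2 - y ^ 2 := by
    rw [sub_pos, ← sq_abs y]
    exact pow_lt_pow_left₀ hy (abs_nonneg y) two_ne_zero
  obtain ⟨p, hp⟩ : ∃ p, p = α * w - y * I := ⟨_, rfl⟩
  have hp_sq : p ^ 2 = (‖α‖ ^ 2 - y ^ 2 : ℝ) := by
    rw [hp]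
    push_cast
    rw [← mul_conj']
    linear_combination α * h + y ^ 2 * I_sq
  have h_re : p.re * p.re - p.im * p.im = ‖α‖ ^ 2 - y ^ 2 := by
    simpa only [pow_two, mul_re, ofReal_re] using congrArg re hp_sq
  have h_im : p.im = 0 := by
    have : p.re * p.im + p.im * p.re = 0 := by
      simpa only [pow_two, mul_im, ofReal_im] using congrArg im hp_sq
    rcases mul_eq_zero.mp (by linarith : p.re * p.im = 0) with h_zero | h_zero
    · nlinarith [mul_self_nonneg p.im]
    · exact h_zero
  have h_norm : ‖α‖ ^ 2 * ‖w‖ ^ 2 = ‖α‖ ^ 2 := by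
    have hαw : α * w = p + y * I := by rw [hp]; ring
    rw [← mul_pow, ← norm_mul, hαw, Complex.sq_norm, normSq_apply]
    simp only [h_im, add_re, add_im, re_ofReal_mul, im_ofReal_mul, I_re, I_im] at h_re ⊢
    linarith
  have hα : ‖α‖ ^ 2 ≠ 0 := pow_ne_zero 2 ((abs_nonneg y).trans_lt hy).ne'
  exact (pow_eq_one_iff_of_nonneg (norm_nonneg w) two_ne_zero).mp ((mul_eq_left₀ hα).mp h_norm)

lemma norm_eq_one_of_schurQuadratic_eq_zero {s t : ℝ} {z w : ℂ} (hz : ‖z‖ = 1)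
    (him : |z.im| < ‖s + t * z‖) (h : schurQuadratic s t z w = 0) : ‖w‖ = 1 := by
  refine norm_eq_one_of_quadratic_eq_zero (y := z.im) him ?_
  have h_conj : z * starRingEnd ℂ z = 1 := by rw [mul_conj', hz]; simp
  have h_im : z - starRingEnd ℂ z = 2 * z.im * I := by rw [sub_conj]; push_cast; ring
  rw [schurQuadratic] at h
  simp only [map_add, map_mul, conj_ofReal]
  linear_combination starRingEnd ℂ z * h + w * h_im - ((s + t * z) * w ^ 2 - z * w - s) * h_conj

lemma IsOpenArc.norm_eq_one {Γ : Set ℂ} (hΓ : IsOpenArc Γ) {z : ℂ} (hz : z ∈ Γ) : ‖z‖ = 1 := by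
  obtain ⟨a, b, -, -, rfl⟩ := hΓ
  obtain ⟨x, -, rfl⟩ := hz
  exact norm_exp_ofReal_mul_I x

lemma exists_isOpenArc_subset {ζ : ℂ} (hζ : ‖ζ‖ = 1) {W : Set ℂ} (hW : W ∈ nhds ζ) :
    ∃ Γ, IsOpenArc Γ ∧ ζ ∈ Γ ∧ Γ ⊆ W := by
  have h_exp : exp (ζ.arg * I) = ζ := by simpa [hζ] using norm_mul_exp_arg_mul_I ζ
  have h_cont : ContinuousAt (fun x : ℝ => exp (x * I)) ζ.arg := by fun_prop
  obtain ⟨ε, hε, h_ball⟩ := Metric.mem_nhds_iff.mp (h_cont.preimage_mem_nhds (h_exp.symm ▸ hW))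
  have hδ : 0 < min ε 1 := lt_min hε one_pos
  refine ⟨_, ⟨ζ.arg - min ε 1, ζ.arg + min ε 1, by linarith, ?_, rfl⟩,
    ⟨ζ.arg, ⟨by linarith, by linarith⟩, h_exp⟩, ?_⟩
  · linarith [min_le_right ε 1, Real.pi_gt_three]
  · rw [← Real.ball_eq_Ioo, image_subset_iff]
    exact (ball_subset_ball (min_le_left ε 1)).trans h_ball

lemma exists_isUnitaryContinuation_self {f : ℂ → ℂ} {ζ : ℂ} (hζ : ‖ζ‖ = 1)
    (hf : AnalyticAt ℂ f ζ) (h_norm : ∀ᶠ z in nhds ζ, ‖z‖ = 1 → ‖f z‖ = 1) :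
    ∃ V, IsUnitaryContinuation f f V ζ := by
  obtain ⟨Γ, hΓ, hζΓ, hΓW⟩ := exists_isOpenArc_subset hζ (hf.eventually_analyticAt.and h_norm)
  exact ⟨{z | AnalyticAt ℂ f z}, isOpen_analyticAt ℂ f, hf, fun _ hz => hz, fun _ _ => rfl,
    Γ, hΓ, hζΓ, fun _ hz => (hΓW hz).1, fun _ hz => (hΓW hz).2 (hΓ.norm_eq_one hz)⟩

lemma schurQuadratic_neg_mul (s z w : ℂ) {e : ℂ} (he : e ^ 2 = 1) :
    schurQuadratic s (-(e * s)) z w = (1 - e * z) * (s * z * w ^ 2 + (1 + e * z) * w + e * s) := by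
  rw [schurQuadratic]
  linear_combination (z ^ 2 * w + s * z) * he

lemma norm_ne_one_of_mul_sq_add_one {a w : ℂ} (ha : ‖a‖ < 1) (h : 2 * w + a * (w ^ 2 + 1) = 0) :
    ‖w‖ ≠ 1 := by
  intro hw
  have h_sum : ‖w ^ 2 + 1‖ ≤ 2 := (norm_add_le _ _).trans_eq (by norm_num [hw])
  have h_two : (2 : ℝ) = ‖a‖ * ‖w ^ 2 + 1‖ := calc
    (2 : ℝ) = ‖2 * w‖ := by norm_num [hw]
    _ = ‖a‖ * ‖w ^ 2 + 1‖ := by rw [eq_neg_of_add_eq_zero_left h, norm_neg, norm_mul]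
  nlinarith [norm_nonneg a]

/-- If `t = -e * s`, then the fixed-point equation has the factor `1 - e * z`. Cancelling it and
letting `z → e` constrains `g e` to an equation without unimodular solutions. -/
lemma IsUnitaryContinuation.add_mul_ne_zero {f g : ℂ → ℂ} {V : Set ℂ} {s t e : ℝ} (hs : |s| < 1)
    (he : e ^ 2 = 1) (hq : ∀ z ∈ ball (0 : ℂ) 1, schurQuadratic s t z (f z) = 0)
    (h : IsUnitaryContinuation f g V e) : t + e * s ≠ 0 := by
  obtain ⟨hV, heV, hg, hgf, Γ, -, heΓ, -, h_norm⟩ := h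
  intro h_zero
  obtain rfl : t = -(e * s) := eq_neg_of_add_eq_zero_left h_zero
  have heC : (e : ℂ) ^ 2 = 1 := by exact_mod_cast he
  have h_abs := abs_eq_one_of_sq_eq_one he
  have h_cont : ContinuousAt (fun z => s * z * g z ^ 2 + (1 + e * z) * g z + e * s) (e : ℂ) := by
    have := (hg e heV).continuousAt
    fun_prop
  have h_eventually : ∀ᶠ z in nhdsWithin (e : ℂ) (ball 0 1),
      s * z * g z ^ 2 + (1 + e * z) * g z + e * s = 0 := by
    filter_upwards [self_mem_nhdsWithin, mem_nhdsWithin_of_mem_nhds (hV.mem_nhds heV)]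
      with z hz hzV
    have h_quad := hq z hz
    rw [← hgf z ⟨hzV, hz⟩, ofReal_neg, ofReal_mul, schurQuadratic_neg_mul _ _ _ heC] at h_quad
    refine (mul_eq_zero.mp h_quad).resolve_left (sub_ne_zero.mpr fun h_one => ?_)
    have : ‖(e : ℂ) * z‖ < 1 := by
      rwa [norm_mul, norm_real, Real.norm_eq_abs, h_abs, one_mul, ← mem_ball_zero_iff]
    simp [← h_one] at this
  have : (nhdsWithin (e : ℂ) (ball 0 1)).NeBot := by
    rw [← mem_closure_iff_nhdsWithin_neBot, closure_ball _ one_ne_zero, mem_closedBall_zero_iff,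
      norm_real, Real.norm_eq_abs, h_abs]
  have h_limit : s * e * g e ^ 2 + (1 + e * e) * g e + e * s = 0 :=
    tendsto_nhds_unique_of_eventuallyEq (h_cont.mono_left nhdsWithin_le_nhds) tendsto_const_nhds
      h_eventually
  refine norm_ne_one_of_mul_sq_add_one (a := e * s) (w := g e) ?_ ?_ (h_norm e heΓ)
  · simpa [h_abs] using hs
  · linear_combination h_limit - g e * heC

section SchurFun

variable {θ θt : ℝ}

lemma schurQuadratic_schurFun {z : ℂ} (hz : 1 - z ^ 2 + schurSqrt θ θt z ≠ 0) :
    schurQuadratic (Real.sin θ) (Real.sin θt) z (schurFun θ θt z) = 0 :=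
  schurQuadratic_div_eq_zero (schurSqrt_sq θ θt z) hz

lemma analyticAt_schurFun {z : ℂ} (hS : AnalyticAt ℂ (schurSqrt θ θt) z)
    (hz : 1 - z ^ 2 + schurSqrt θ θt z ≠ 0) : AnalyticAt ℂ (schurFun θ θt) z :=
  AnalyticAt.div (by fun_prop) (by fun_prop) hz

lemma schurFun_ofReal {e : ℝ} (he : e ^ 2 = 1) :
    schurFun θ θt e =
      (|Real.sin θt + e * Real.sin θ| / (Real.sin θt + e * Real.sin θ) : ℝ) := by
  have heC : (e : ℂ) ^ 2 = 1 := by exact_mod_cast he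
  rw [schurFun, schurSqrt_ofReal he, heC, sub_self, zero_add]
  generalize hx : Real.sin θt + e * Real.sin θ = x
  have h_num : (Real.sin θt + Real.sin θ * e : ℂ) = x := by rw [← hx]; push_cast; ring
  rw [h_num, ofReal_mul, ofReal_ofNat, mul_div_mul_left _ _ two_ne_zero, ← ofReal_div]
  rcases abs_choice x with h_abs | h_abs <;> simp only [h_abs, div_neg, neg_div]

lemma analyticOnNhd_schurFun : AnalyticOnNhd ℂ (schurFun θ θt) (ball 0 1) := fun _ hz =>
  have hz' := mem_ball_zero_iff.mp hz
  analyticAt_schurFun (analyticAt_schurSqrt θ θt hz') (one_sub_sq_add_schurSqrt_ne_zero θ θt hz')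

lemma schurQuadratic_schurFun_of_mem_ball {z : ℂ} (hz : z ∈ ball (0 : ℂ) 1) :
    schurQuadratic (Real.sin θ) (Real.sin θt) z (schurFun θ θt z) = 0 :=
  schurQuadratic_schurFun (one_sub_sq_add_schurSqrt_ne_zero θ θt (mem_ball_zero_iff.mp hz))

lemma exists_isUnitaryContinuation_schurFun {e : ℝ} (he : e ^ 2 = 1)
    (hne : Real.sin θt + e * Real.sin θ ≠ 0) :
    ∃ V, IsUnitaryContinuation (schurFun θ θt) (schurFun θ θt) V e := by
  have h_sqrt : AnalyticAt ℂ (schurSqrt θ θt) e := analyticAt_schurSqrt_ofReal he hne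
  have heC : (e : ℂ) ^ 2 = 1 := by exact_mod_cast he
  have h_den : 1 - (e : ℂ) ^ 2 + schurSqrt θ θt e ≠ 0 := by
    simpa only [heC, sub_self, zero_add, schurSqrt_ofReal he, ofReal_ne_zero, mul_ne_zero_iff,
      abs_ne_zero] using ⟨two_ne_zero, hne⟩
  refine exists_isUnitaryContinuation_self (by simpa using abs_eq_one_of_sq_eq_one he)
    (analyticAt_schurFun h_sqrt h_den) ?_
  have h_im : |(e : ℂ).im| < ‖(Real.sin θ + Real.sin θt * e : ℂ)‖ := by
    have h_factor : (Real.sin θ + Real.sin θt * e : ℂ) =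
        (e * (Real.sin θt + e * Real.sin θ) : ℝ) := by
      push_cast
      linear_combination -Complex.sin θ * heC
    rw [h_factor, ofReal_im, abs_zero, norm_real, norm_pos_iff]
    exact mul_ne_zero (abs_ne_zero.mp ((abs_eq_one_of_sq_eq_one he).trans_ne one_ne_zero)) hne
  have h_den_near : ∀ᶠ z in nhds (e : ℂ), 1 - z ^ 2 + schurSqrt θ θt z ≠ 0 :=
    ContinuousAt.eventually_ne (by have := h_sqrt.continuousAt; fun_prop) h_den
  have h_im_near : ∀ᶠ z in nhds (e : ℂ), |z.im| < ‖(Real.sin θ + Real.sin θt * z : ℂ)‖ :=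
    ContinuousAt.eventually_lt (by fun_prop) (by fun_prop) h_im
  filter_upwards [h_den_near, h_im_near] with z hz_den hz_im hz
  exact norm_eq_one_of_schurQuadratic_eq_zero hz hz_im (schurQuadratic_schurFun hz_den)

end SchurFun

lemma abs_div_self_eq_sign (x : ℝ) : |x| / x = Real.sign x := by
  rcases lt_trichotomy x 0 with hx | rfl | hx
  · rw [Real.sign_of_neg hx, abs_of_neg hx, neg_div, div_self hx.ne]
  · simp
  · rw [Real.sign_of_pos hx, abs_of_pos hx, div_self hx.ne']

lemma sign_sin_sub_sin {x y : ℝ} (hx : x ∈ Icc (-(Real.pi / 2)) (Real.pi / 2))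
    (hy : y ∈ Icc (-(Real.pi / 2)) (Real.pi / 2)) :
    Real.sign (Real.sin x - Real.sin y) = Real.sign (x - y) := by
  rcases lt_trichotomy x y with h | rfl | h
  · rw [Real.sign_of_neg (sub_neg.mpr h),
      Real.sign_of_neg (sub_neg.mpr (Real.strictMonoOn_sin hx hy h))]
  · simp
  · rw [Real.sign_of_pos (sub_pos.mpr h),
      Real.sign_of_pos (sub_pos.mpr (Real.strictMonoOn_sin hy hx h))]

lemma sign_sin_add_mul_sin {x y e : ℝ} (hx : x ∈ Icc (-(Real.pi / 2)) (Real.pi / 2))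
    (hy : y ∈ Icc (-(Real.pi / 2)) (Real.pi / 2)) (he : e ^ 2 = 1) :
    Real.sign (Real.sin x + e * Real.sin y) = Real.sign (x + e * y) := by
  rcases sq_eq_one_iff.mp he with rfl | rfl
  · have hy' : -y ∈ Icc (-(Real.pi / 2)) (Real.pi / 2) := by rwa [neg_mem_Icc_iff, neg_neg]
    simpa only [one_mul, Real.sin_neg, sub_neg_eq_add] using sign_sin_sub_sin hx hy'
  · simpa only [neg_one_mul, ← sub_eq_add_neg] using sign_sin_sub_sin hx hy

theorem isUnitaryContinuation_schurFun_dichotomy {θ θt e : ℝ}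
    (hθ : θ ∈ Icc (-(Real.pi / 2)) (Real.pi / 2))
    (hθt : θt ∈ Icc (-(Real.pi / 2)) (Real.pi / 2)) (hs : |Real.sin θ| < 1) (he : e ^ 2 = 1) :
    (θt + e * θ ≠ 0 → ∃ V g, IsUnitaryContinuation (schurFun θ θt) g V e ∧
      g e = (|Real.sin θt + e * Real.sin θ| / (Real.sin θt + e * Real.sin θ) : ℝ) ∧
      g e = (Real.sign (θt + e * θ) : ℝ)) ∧
    (θt + e * θ = 0 → ¬ ∃ V g, IsUnitaryContinuation (schurFun θ θt) g V e) := by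
  have h_sign := sign_sin_add_mul_sin hθt hθ he
  have h_zero : Real.sin θt + e * Real.sin θ = 0 ↔ θt + e * θ = 0 := by
    rw [← Real.sign_eq_zero_iff, h_sign, Real.sign_eq_zero_iff]
  refine ⟨fun h_ne => ?_, fun h_eq ⟨V, g, hg⟩ => ?_⟩
  · obtain ⟨V, hV⟩ := exists_isUnitaryContinuation_schurFun he (h_zero.not.mpr h_ne)
    exact ⟨V, _, hV, schurFun_ofReal he, by rw [schurFun_ofReal he, abs_div_self_eq_sign, h_sign]⟩
  · exact hg.add_mul_ne_zero hs he (fun z => schurQuadratic_schurFun_of_mem_ball)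
      (h_zero.mpr h_eq)

/-- For `s, s̃ ∈ (-1,1)`, `θ = arcsin s`, `θ̃ = arcsin s̃`, the Schur
function with 2-periodic Schur parameters `(s̃, s, s̃, s, …)`, given by
`f(z) = (z² - 1 + √Δ(z)) / (2z(s + s̃z))` with `Δ(z) = (1-z²)² + 4z(s+s̃z)(sz+s̃)` and
the branch of `√Δ` analytic near `0` with `√Δ(0) = 1`, is analytic and bounded by `1` on
the unit disk, satisfies the fixed-point relation `f = T_s T_{s̃} f` of the Schur
algorithm (in cross-multiplied form), and: if `θ̃ + θ ≠ 0` then `f` extends analytically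
to a neighbourhood of `1`, unimodularly on an arc of `𝕋` around `1`, with
`f(1) = |s̃+s|/(s̃+s) = sgn(θ̃+θ)`; if `θ̃ - θ ≠ 0` similarly at `-1` with
`f(-1) = |s̃-s|/(s̃-s) = sgn(θ̃-θ)`; and conversely if `θ̃ + θ = 0` (resp. `θ̃ - θ = 0`)
no such unitary analytic continuation around `1` (resp. `-1`) exists. -/
theorem statement16 (s st : ℝ) (hs : s ∈ Set.Ioo (-1 : ℝ) 1) (hst : st ∈ Set.Ioo (-1 : ℝ) 1)
    (θ θt : ℝ) (hθ : θ = Real.arcsin s) (hθt : θt = Real.arcsin st)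
    (Δ : ℂ → ℂ)
    (hΔ : ∀ z : ℂ,
      Δ z = (1 - z ^ 2) ^ 2 + 4 * z * ((s : ℂ) + (st : ℂ) * z) * ((s : ℂ) * z + (st : ℂ))) :
    ∃ f : ℂ → ℂ,
      AnalyticOnNhd ℂ f (Metric.ball (0 : ℂ) 1) ∧
      (∀ z ∈ Metric.ball (0 : ℂ) 1, ‖f z‖ ≤ 1) ∧
      (∃ (U : Set ℂ) (sq : ℂ → ℂ), IsOpen U ∧ (0 : ℂ) ∈ U ∧ AnalyticOnNhd ℂ sq U ∧
        sq 0 = 1 ∧ (∀ z ∈ U, sq z ^ 2 = Δ z) ∧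
        (∀ z ∈ U, 2 * z * ((s : ℂ) + (st : ℂ) * z) * f z = z ^ 2 - 1 + sq z)) ∧
      (∀ z ∈ Metric.ball (0 : ℂ) 1,
        (f z - (st : ℂ)) * (1 + (s : ℂ) * z * f z) =
          z * (z * f z + (s : ℂ)) * (1 - (st : ℂ) * f z)) ∧
      ((θt + θ ≠ 0 →
        ∃ (V : Set ℂ) (g : ℂ → ℂ), IsOpen V ∧ (1 : ℂ) ∈ V ∧ AnalyticOnNhd ℂ g V ∧
          (∀ z ∈ V ∩ Metric.ball (0 : ℂ) 1, g z = f z) ∧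
          (∃ Γ : Set ℂ, IsOpenArc Γ ∧ (1 : ℂ) ∈ Γ ∧ Γ ⊆ V ∧ ∀ z ∈ Γ, ‖g z‖ = 1) ∧
          g 1 = ((|st + s| / (st + s) : ℝ) : ℂ) ∧
          g 1 = ((Real.sign (θt + θ) : ℝ) : ℂ)) ∧
       (θt + θ = 0 →
        ¬ ∃ (V : Set ℂ) (g : ℂ → ℂ), IsOpen V ∧ (1 : ℂ) ∈ V ∧ AnalyticOnNhd ℂ g V ∧
          (∀ z ∈ V ∩ Metric.ball (0 : ℂ) 1, g z = f z) ∧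
          (∃ Γ : Set ℂ, IsOpenArc Γ ∧ (1 : ℂ) ∈ Γ ∧ Γ ⊆ V ∧ ∀ z ∈ Γ, ‖g z‖ = 1))) ∧
      ((θt - θ ≠ 0 →
        ∃ (V : Set ℂ) (g : ℂ → ℂ), IsOpen V ∧ (-1 : ℂ) ∈ V ∧ AnalyticOnNhd ℂ g V ∧
          (∀ z ∈ V ∩ Metric.ball (0 : ℂ) 1, g z = f z) ∧
          (∃ Γ : Set ℂ, IsOpenArc Γ ∧ (-1 : ℂ) ∈ Γ ∧ Γ ⊆ V ∧ ∀ z ∈ Γ, ‖g z‖ = 1) ∧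
          g (-1) = ((|st - s| / (st - s) : ℝ) : ℂ) ∧
          g (-1) = ((Real.sign (θt - θ) : ℝ) : ℂ)) ∧
       (θt - θ = 0 →
        ¬ ∃ (V : Set ℂ) (g : ℂ → ℂ), IsOpen V ∧ (-1 : ℂ) ∈ V ∧ AnalyticOnNhd ℂ g V ∧
          (∀ z ∈ V ∩ Metric.ball (0 : ℂ) 1, g z = f z) ∧
          (∃ Γ : Set ℂ, IsOpenArc Γ ∧ (-1 : ℂ) ∈ Γ ∧ Γ ⊆ V ∧ ∀ z ∈ Γ, ‖g z‖ = 1))) := by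
  have hs' : |s| < 1 := abs_lt.mpr hs
  have hst' : |st| < 1 := abs_lt.mpr hst
  have hθ_mem : θ ∈ Icc (-(Real.pi / 2)) (Real.pi / 2) := hθ ▸ Real.arcsin_mem_Icc s
  have hθt_mem : θt ∈ Icc (-(Real.pi / 2)) (Real.pi / 2) := hθt ▸ Real.arcsin_mem_Icc st
  obtain rfl : s = Real.sin θ := by rw [hθ, Real.sin_arcsin hs.1.le hs.2.le]
  obtain rfl : st = Real.sin θt := by rw [hθt, Real.sin_arcsin hst.1.le hst.2.le]
  have h_quad (z : ℂ) (hz : z ∈ ball (0 : ℂ) 1) := schurQuadratic_schurFun_of_mem_ball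
    (θ := θ) (θt := θt) hz
  refine ⟨schurFun θ θt, analyticOnNhd_schurFun,
    norm_le_one_of_schurQuadratic_eq_zero hs' hst' analyticOnNhd_schurFun.continuousOn h_quad,
    ⟨ball 0 1, schurSqrt θ θt, isOpen_ball, mem_ball_self one_pos, fun z hz => ?_,
      schurSqrt_zero θ θt, fun z _ => (schurSqrt_sq θ θt z).trans (hΔ z).symm, fun z hz => ?_⟩,
    fun z hz => schurQuadratic_eq_zero_iff.mp (h_quad z hz), ?_, ?_⟩
  · exact analyticAt_schurSqrt θ θt (mem_ball_zero_iff.mp hz)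
  · exact two_mul_mul_div_eq (schurSqrt_sq θ θt z)
      (one_sub_sq_add_schurSqrt_ne_zero θ θt (mem_ball_zero_iff.mp hz))
  · simpa only [IsUnitaryContinuation, and_assoc, ofReal_one, one_mul] using
      isUnitaryContinuation_schurFun_dichotomy hθ_mem hθt_mem hs' (one_pow 2)
  · simpa only [IsUnitaryContinuation, and_assoc, ofReal_neg, ofReal_one, neg_one_mul,
      ← sub_eq_add_neg] using isUnitaryContinuation_schurFun_dichotomy hθ_mem hθt_mem hs' neg_one_sq
end
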